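/- There exists a function f ∈ L¹(ρ) such that the heat maximal function Mf belongs to L¹(ρ) but f does not belong to H¹. -/

import Mathlib

open MeasureTheory Real Filter Set
open scoped ENNReal

noncomputable section

/-- The group `G = ℝ² ⋊ ℝ⁺`, realized as triples `(x₁, x₂, a)` (only `a > 0` is relevant). -/
abbrev G : Type := ℝ × ℝ × ℝ

/-- Group product `(x₁,x₂,a)·(x₁',x₂',a') = (x₁+a x₁', x₂+a x₂', a a')`. -/
def gMul (x y : G) : G := (x.1 + x.2.2 * y.1, x.2.1 + x.2.2 * y.2.1, x.2.2 * y.2.2)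

/-- Group inverse `(x₁,x₂,a)⁻¹ = (−x₁/a, −x₂/a, 1/a)`. -/
def gInv (x : G) : G := (-x.1 / x.2.2, -x.2.1 / x.2.2, 1 / x.2.2)

/-- The identity `e = (0,0,1)`. -/
def gE : G := (0, 0, 1)

/-- The right Haar measure `dρ = a⁻¹ dx₁ dx₂ da` (supported where `a > 0`). -/
def ρG : Measure G :=
  (volume : Measure G).withDensity fun x => ENNReal.ofReal (if 0 < x.2.2 then x.2.2⁻¹ else 0)

/-- The modular function `δ(x₁,x₂,a) = a⁻²`. -/
def deltaG (x : G) : ℝ := (x.2.2 ^ 2)⁻¹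

/-- `|x| = √(x₁² + x₂²)`. -/
def normG (x : G) : ℝ := Real.sqrt (x.1 ^ 2 + x.2.1 ^ 2)

/-- `cosh r(x) = (a + a⁻¹ + a⁻¹|x|²)/2`. -/
def coshArg (x : G) : ℝ := (x.2.2 + x.2.2⁻¹ + x.2.2⁻¹ * (x.1 ^ 2 + x.2.1 ^ 2)) / 2

/-- `r(x) ≥ 0` is determined by `cosh r(x) = coshArg x`; explicitly `r = arcosh (coshArg x)`. -/
def rG (x : G) : ℝ := Real.log (coshArg x + Real.sqrt (coshArg x ^ 2 - 1))

/-- The left-invariant distance `d(x,y) = r(x⁻¹y)`. -/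
def dG (x y : G) : ℝ := rG (gMul (gInv x) y)

/-- The heat kernel
`p_t(x) = (8π^{3/2})⁻¹ δ(x)^{1/2} (r(x)/sinh r(x)) t^{−3/2} exp(−r(x)²/(4t))`,
with `r/sinh r := 1` at `x = e`. -/
def heatK (t : ℝ) (x : G) : ℝ :=
  (8 * Real.pi ^ ((3 : ℝ)/2))⁻¹ * Real.sqrt (deltaG x) *
    (if rG x = 0 then 1 else rG x / Real.sinh (rG x)) *
    t ^ (-(3 : ℝ)/2) * Real.exp (-(rG x ^ 2) / (4 * t))

/-- Convolution `f ∗ p_t(x) = ∫ f(xy⁻¹) p_t(y) dρ(y)`. -/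
def convHeat (f : G → ℝ) (t : ℝ) (x : G) : ℝ := ∫ y, f (gMul x (gInv y)) * heatK t y ∂ρG

/-- The heat maximal operator `Mf(x) = sup_{t>0} |f ∗ p_t(x)|` (valued in `ℝ≥0∞`). -/
def maxHeat (f : G → ℝ) (x : G) : ℝ≥0∞ :=
  ⨆ (t : ℝ) (_ : 0 < t), ENNReal.ofReal |convHeat f t x|

/-- Calderón–Zygmund sets. -/
def IsCZ (R : Set G) : Prop :=
  ∃ c : G, ∃ L r : ℝ, 0 < c.2.2 ∧ 0 < L ∧ 0 < r ∧
    R = Set.Icc (c.1 - L/2) (c.1 + L/2) ×ˢ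
        (Set.Icc (c.2.1 - L/2) (c.2.1 + L/2) ×ˢ
         Set.Icc (c.2.2 * Real.exp (-r)) (c.2.2 * Real.exp r)) ∧
    (r < 1 → Real.exp 2 * c.2.2 * r ≤ L ∧ L < Real.exp 8 * c.2.2 * r) ∧
    (1 ≤ r → c.2.2 * Real.exp (2*r) ≤ L ∧ L < c.2.2 * Real.exp (8*r))

/-- Atoms: `A ∈ L¹(ρ)` supported in a Calderón–Zygmund set `R`, with
`‖A‖_∞ ≤ ρ(R)⁻¹` and `∫ A dρ = 0`. -/
def IsAtomG (A : G → ℝ) : Prop :=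
  Integrable A ρG ∧
  ∃ R : Set G, IsCZ R ∧ (∀ x ∉ R, A x = 0) ∧
    eLpNorm A ⊤ ρG ≤ (ρG R)⁻¹ ∧
    ∫ x, A x ∂ρG = 0

/-- `f = Σ_j lam_j A_j` with atoms `A_j`, `Σ_j |lam_j| < ∞`, converging in `L¹(ρ)`. -/
def IsH1Decomp (f : G → ℝ) (lam : ℕ → ℝ) (A : ℕ → G → ℝ) : Prop :=
  (∀ j, IsAtomG (A j)) ∧ Summable (fun j => |lam j|) ∧
  Tendsto (fun N => eLpNorm (fun x => f x - ∑ j ∈ Finset.range N, lam j * A j x) 1 ρG)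
    atTop (nhds 0)

/-- The Hardy space `H¹`. -/
def MemH1 (f : G → ℝ) : Prop :=
  Integrable f ρG ∧ ∃ lam A, IsH1Decomp f lam A

/-- `‖f‖_{H¹} = inf Σ_j |lam_j|` over all atomic decompositions. -/
def H1norm (f : G → ℝ) : ℝ :=
  sInf {s | ∃ lam A, IsH1Decomp f lam A ∧ s = ∑' j, |lam j|}

/-- The left-invariant vector field `X₀ = a ∂_a`. -/
def X0 (f : G → ℝ) (x : G) : ℝ := x.2.2 * deriv (fun s => f (x.1, x.2.1, s)) x.2.2

/-- The left-invariant vector field `X₁ = a ∂_{x₁}`. -/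
def X1 (f : G → ℝ) (x : G) : ℝ := x.2.2 * deriv (fun s => f (s, x.2.1, x.2.2)) x.1

/-- The left-invariant vector field `X₂ = a ∂_{x₂}`. -/
def X2 (f : G → ℝ) (x : G) : ℝ := x.2.2 * deriv (fun s => f (x.1, s, x.2.2)) x.2.1

/-- `‖∇p_t(x)‖`, the Euclidean norm of `(X₀p_t, X₁p_t, X₂p_t)` at `x`. -/
def gradHeatNorm (t : ℝ) (x : G) : ℝ :=
  Real.sqrt (X0 (heatK t) x ^ 2 + X1 (heatK t) x ^ 2 + X2 (heatK t) x ^ 2)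

/-- The Poisson kernel `q_t(x) = π⁻² δ(x)^{1/2} (r(x)/sinh r(x)) · t/(t²+r(x)²)²`. -/
def poissonK (t : ℝ) (x : G) : ℝ :=
  (Real.pi ^ 2)⁻¹ * Real.sqrt (deltaG x) *
    (if rG x = 0 then 1 else rG x / Real.sinh (rG x)) *
    (t / (t ^ 2 + rG x ^ 2) ^ 2)

/-- Convolution `f ∗ q_t(x) = ∫ f(xy⁻¹) q_t(y) dρ(y)`. -/
def convPoisson (f : G → ℝ) (t : ℝ) (x : G) : ℝ := ∫ y, f (gMul x (gInv y)) * poissonK t y ∂ρG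

/-- The Poisson maximal operator `M̃f(x) = sup_{t>0} |f ∗ q_t(x)|`. -/
def maxPoisson (f : G → ℝ) (x : G) : ℝ≥0∞ :=
  ⨆ (t : ℝ) (_ : 0 < t), ENNReal.ofReal |convPoisson f t x|

/-- `G_{r₁}(x) = sup_{z ∈ B(x,r₁/2)} sup_{t>0} ‖∇p_t(z)‖`. -/
def Gsup (r1 : ℝ) (x : G) : ℝ≥0∞ :=
  ⨆ (z : G) (_ : 0 < z.2.2 ∧ dG x z < r1 / 2) (t : ℝ) (_ : 0 < t),
    ENNReal.ofReal (gradHeatNorm t z)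

/-- `R₀ = [−1,1]×[−1,1]×[e⁻¹,e]`. -/
def R0set : Set G :=
  Set.Icc (-1 : ℝ) 1 ×ˢ (Set.Icc (-1 : ℝ) 1 ×ˢ Set.Icc (Real.exp (-1)) (Real.exp 1))

/-- `R_L = [L−1,L+1]×[−1,1]×[e⁻¹,e]`. -/
def RLset (L : ℝ) : Set G :=
  Set.Icc (L - 1) (L + 1) ×ˢ (Set.Icc (-1 : ℝ) 1 ×ˢ Set.Icc (Real.exp (-1)) (Real.exp 1))

/-- `f_L = χ_{R_L} − χ_{R₀}`. -/
def fL (L : ℝ) : G → ℝ := fun x =>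
  (RLset L).indicator (fun _ => (1 : ℝ)) x - R0set.indicator (fun _ => (1 : ℝ)) x

/-- The mean of `g` over `R` with respect to `ρ`. -/
def czMean (g : G → ℝ) (R : Set G) : ℝ := (∫ x in R, g x ∂ρG) / (ρG R).toReal

/-- `‖g‖_{BMO} = sup_R ρ(R)⁻¹ ∫_R |g − g_R| dρ` over Calderón–Zygmund sets `R`. -/
def czBMO (g : G → ℝ) : ℝ≥0∞ :=
  ⨆ (R : Set G) (_ : IsCZ R),
    (ρG R)⁻¹ * ∫⁻ x in R, ENNReal.ofReal |g x - czMean g R| ∂ρG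

/-- `‖h‖_{BMO(ℝ)} = sup_Q |Q|⁻¹ ∫_Q |h − h_Q|` over bounded intervals `Q ⊂ ℝ`. -/
def lineBMO (h : ℝ → ℝ) : ℝ≥0∞ :=
  ⨆ (a : ℝ) (b : ℝ) (_ : a < b),
    (ENNReal.ofReal (b - a))⁻¹ *
      ∫⁻ s in Set.Icc a b, ENNReal.ofReal |h s - (∫ u in Set.Icc a b, h u) / (b - a)|

/-- `2R₀ = [−2,2]×[−2,2]×[e⁻²,e²]`. -/
def twoR0set : Set G :=
  Set.Icc (-2 : ℝ) 2 ×ˢ (Set.Icc (-2 : ℝ) 2 ×ˢ Set.Icc (Real.exp (-2)) (Real.exp 2))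

/-- The set `{x₁ > 3, |x₂| < 1, e⁻¹ < a < e}`. -/
def domSpecial : Set G :=
  {x : G | 3 < x.1 ∧ |x.2.1| < 1 ∧ Real.exp (-1) < x.2.2 ∧ x.2.2 < Real.exp 1}

/-- The function equal to `1/(x₁ (log x₁)^{3/2})` on `{x₁ > 3, |x₂| < 1, e⁻¹ < a < e}`,
to `c₀` on `R₀`, and `0` elsewhere. -/
def fSpecial (c0 : ℝ) : G → ℝ := fun x =>
  domSpecial.indicator (fun y => (y.1 * Real.log y.1 ^ ((3 : ℝ)/2))⁻¹) x
    + R0set.indicator (fun _ => c0) x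


/-! ### The measure in logarithmic coordinates -/

lemma lintegral_wt (g : ℝ → ℝ≥0∞) :
    ∫⁻ a : ℝ, ENNReal.ofReal (if 0 < a then a⁻¹ else 0) * g a = ∫⁻ s : ℝ, g (Real.exp s) := by
  have h := lintegral_image_eq_lintegral_abs_deriv_mul (s := Set.univ) (f := Real.exp)
    (f' := Real.exp) MeasurableSet.univ (fun x _ => (Real.hasDerivAt_exp x).hasDerivWithinAt)
    (Real.exp_injective.injOn) (fun a => ENNReal.ofReal (if 0 < a then a⁻¹ else 0) * g a)
  have hr : Real.exp '' Set.univ = Set.Ioi 0 := by rw [Set.image_univ, Real.range_exp]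
  rw [hr, Measure.restrict_univ] at h
  rw [← lintegral_indicator measurableSet_Ioi] at h
  have h1 : (fun a => (Set.Ioi (0:ℝ)).indicator
      (fun a => ENNReal.ofReal (if 0 < a then a⁻¹ else 0) * g a) a)
      = fun a => ENNReal.ofReal (if 0 < a then a⁻¹ else 0) * g a := by
    funext a
    by_cases ha : 0 < a
    · rw [Set.indicator_of_mem (by exact ha)]
    · rw [Set.indicator_of_notMem (by exact ha)]
      simp [ha]
  rw [h1] at h
  rw [h]
  refine lintegral_congr fun s => ?_
  rw [← mul_assoc, if_pos (Real.exp_pos s), ← ENNReal.ofReal_mul (abs_nonneg _),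
    abs_of_pos (Real.exp_pos s), mul_inv_cancel₀ (Real.exp_pos s).ne']
  simp

lemma lintegral_rho (F : G → ℝ≥0∞) (hF : Measurable F) :
    ∫⁻ x, F x ∂ρG = ∫⁻ s : ℝ, ∫⁻ x2 : ℝ, ∫⁻ x1 : ℝ, F (x1, x2, Real.exp s) := by
  have hw : Measurable (fun a : ℝ => ENNReal.ofReal (if 0 < a then a⁻¹ else 0)) := by
    refine Measurable.ennreal_ofReal ?_
    exact Measurable.ite measurableSet_Ioi measurable_inv measurable_const
  have hw' : Measurable (fun x : G => ENNReal.ofReal (if 0 < x.2.2 then x.2.2⁻¹ else 0)) :=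
    hw.comp (measurable_snd.comp measurable_snd)
  unfold ρG
  rw [lintegral_withDensity_eq_lintegral_mul _ hw' hF]
  rw [Measure.volume_eq_prod, lintegral_prod_symm' _ (hw'.mul hF)]
  rw [Measure.volume_eq_prod, lintegral_prod_symm' _ (Measurable.lintegral_prod_left (hw'.mul hF))]
  rw [← lintegral_wt (fun a => ∫⁻ x2 : ℝ, ∫⁻ x1 : ℝ, F (x1, x2, a))]
  refine lintegral_congr fun a => ?_
  simp only [Pi.mul_apply]
  rw [← lintegral_const_mul]
  · refine lintegral_congr fun x2 => ?_
    rw [← lintegral_const_mul]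
    exact hF.comp (by fun_prop)
  · have : Measurable (fun p : ℝ × ℝ => F (p.1, p.2, a)) := hF.comp (by fun_prop)
    exact Measurable.lintegral_prod_left' (f := fun p : ℝ × ℝ => F (p.1, p.2, a)) this

lemma ae_pos : ∀ᵐ x ∂ρG, 0 < x.2.2 := by
  have hm : MeasurableSet {x : G | ¬ 0 < x.2.2} :=
    (measurableSet_lt measurable_const (measurable_snd.comp measurable_snd)).compl
  rw [ae_iff, ← lintegral_indicator_one hm, lintegral_rho _ (measurable_one.indicator hm)]
  simp [Set.indicator, not_le.mpr (Real.exp_pos _)]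

instance sf_rho : SigmaFinite ρG := by
  unfold ρG; infer_instance

lemma lintegral_rho_le {F H : G → ℝ≥0∞} (h : ∀ x : G, 0 < x.2.2 → F x ≤ H x) :
    ∫⁻ x, F x ∂ρG ≤ ∫⁻ x, H x ∂ρG :=
  lintegral_mono_ae (ae_pos.mono fun x hx => h x hx)

/-- the shear maps preserve the measure -/
def shear (k : ℝ) (y : G) : G := (y.1 - k * y.2.2, y.2.1, y.2.2)

lemma measurable_shear (k : ℝ) : Measurable (shear k) := by
  unfold shear; fun_prop

lemma lintegral_shear (k : ℝ) (F : G → ℝ≥0∞) (hF : Measurable F) :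
    ∫⁻ x, F (shear k x) ∂ρG = ∫⁻ x, F x ∂ρG := by
  rw [lintegral_rho (fun x => F (shear k x)) (hF.comp (measurable_shear k)), lintegral_rho _ hF]
  refine lintegral_congr fun s => lintegral_congr fun x2 => ?_
  exact lintegral_sub_right_eq_self (fun x1 => F (x1, x2, Real.exp s)) (k * Real.exp s)

lemma mp_shear (k : ℝ) : MeasurePreserving (shear k) ρG ρG := by
  refine ⟨measurable_shear k, ?_⟩
  ext s hs
  rw [Measure.map_apply (measurable_shear k) hs, ← lintegral_indicator_one hs,
    ← lintegral_indicator_one (measurable_shear k hs),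
    ← lintegral_shear k _ (measurable_one.indicator hs)]
  rfl

lemma measurable_gMulInv : Measurable (fun p : G × G => gMul p.1 (gInv p.2)) := by
  unfold gMul gInv; fun_prop

/-- right invariance -/
lemma lintegral_right (F : G → ℝ≥0∞) (hF : Measurable F) (y : G) (hy : 0 < y.2.2) :
    ∫⁻ x, F (gMul x (gInv y)) ∂ρG = ∫⁻ x, F x ∂ρG := by
  have hm : Measurable fun x => F (gMul x (gInv y)) := by
    refine hF.comp ?_
    unfold gMul gInv; fun_prop
  rw [lintegral_rho _ hm, lintegral_rho _ hF]
  rw [← lintegral_sub_right_eq_self (fun s => ∫⁻ x2 : ℝ, ∫⁻ x1 : ℝ, F (x1, x2, Real.exp s))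
    (Real.log y.2.2)]
  refine lintegral_congr fun s => ?_
  rw [← lintegral_add_right_eq_self (fun x2 : ℝ => ∫⁻ x1 : ℝ, F (x1, x2, Real.exp (s - Real.log y.2.2)))
    (Real.exp s * (-y.2.1 / y.2.2))]
  refine lintegral_congr fun x2 => ?_
  rw [← lintegral_add_right_eq_self (fun x1 : ℝ => F (x1, _, Real.exp (s - Real.log y.2.2)))
    (Real.exp s * (-y.1 / y.2.2))]
  refine lintegral_congr fun x1 => ?_
  simp only [gMul, gInv]
  rw [Real.exp_sub, Real.exp_log hy, mul_one_div]

/-- Young's inequality (equality) -/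
lemma lintegral_conv (F Ψ : G → ℝ≥0∞) (hF : Measurable F) (hΨ : Measurable Ψ) :
    ∫⁻ x, ∫⁻ y, F (gMul x (gInv y)) * Ψ y ∂ρG ∂ρG = (∫⁻ x, F x ∂ρG) * ∫⁻ y, Ψ y ∂ρG := by
  rw [lintegral_lintegral_swap]
  · rw [← lintegral_const_mul _ hΨ]
    refine lintegral_congr_ae (ae_pos.mono fun y hy => ?_)
    simp only
    rw [lintegral_mul_const, lintegral_right F hF y hy]
    refine hF.comp ?_
    unfold gMul gInv; fun_prop
  · exact ((hF.comp measurable_gMulInv).mul (hΨ.comp measurable_snd)).aemeasurable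

lemma measurable_conv (F Ψ : G → ℝ≥0∞) (hF : Measurable F) (hΨ : Measurable Ψ) :
    Measurable fun x => ∫⁻ y, F (gMul x (gInv y)) * Ψ y ∂ρG :=
  Measurable.lintegral_prod_right ((hF.comp measurable_gMulInv).mul (hΨ.comp measurable_snd))

/-- boxes -/
lemma rho_box (a b c d p q : ℝ) (hp : 0 < p) (hpq : p ≤ q) :
    ρG (Set.Icc a b ×ˢ (Set.Icc c d ×ˢ Set.Icc p q)) =
      ENNReal.ofReal (Real.log (q / p)) * (ENNReal.ofReal (d - c) * ENNReal.ofReal (b - a)) := by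
  have hm : MeasurableSet (Set.Icc a b ×ˢ (Set.Icc c d ×ˢ Set.Icc p q)) :=
    measurableSet_Icc.prod (measurableSet_Icc.prod measurableSet_Icc)
  rw [← lintegral_indicator_one hm, lintegral_rho _ (measurable_one.indicator hm)]
  have h1 : ∀ s x2 x1 : ℝ, (Set.Icc a b ×ˢ (Set.Icc c d ×ˢ Set.Icc p q)).indicator (1 : G → ℝ≥0∞)
      (x1, x2, Real.exp s) = (Set.Icc (Real.log p) (Real.log q)).indicator 1 s *
        ((Set.Icc c d).indicator 1 x2 * (Set.Icc a b).indicator 1 x1) := by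
    intro s x2 x1
    have : s ∈ Set.Icc (Real.log p) (Real.log q) ↔ Real.exp s ∈ Set.Icc p q := by
      rw [Set.mem_Icc, Set.mem_Icc, Real.log_le_iff_le_exp hp, Real.le_log_iff_exp_le (by linarith)]
    simp only [Set.indicator_apply, this, Set.mem_prod, Pi.one_apply]
    split_ifs <;> simp_all
  simp_rw [h1]
  have e1 : ∀ a b : ℝ, ∫⁻ x : ℝ, (Set.Icc a b).indicator (1 : ℝ → ℝ≥0∞) x = ENNReal.ofReal (b - a) := by
    intro a b
    rw [lintegral_indicator_one measurableSet_Icc, Real.volume_Icc]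
  have hmi : ∀ a b : ℝ, Measurable ((Set.Icc a b).indicator (1 : ℝ → ℝ≥0∞)) := fun a b =>
    measurable_one.indicator measurableSet_Icc
  have e2 : ∀ s : ℝ, ∫⁻ x2 : ℝ, ∫⁻ x1 : ℝ, (Set.Icc (Real.log p) (Real.log q)).indicator (1 : ℝ → ℝ≥0∞) s *
        ((Set.Icc c d).indicator 1 x2 * (Set.Icc a b).indicator 1 x1) =
        (Set.Icc (Real.log p) (Real.log q)).indicator 1 s *
          (ENNReal.ofReal (d - c) * ENNReal.ofReal (b - a)) := by
    intro s
    rw [← e1 c d, ← lintegral_mul_const _ (hmi _ _), ← lintegral_const_mul _ ((hmi _ _).mul_const _)]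
    refine lintegral_congr fun x2 => ?_
    rw [lintegral_const_mul _ ((hmi _ _).const_mul _), lintegral_const_mul _ (hmi _ _), e1]
  simp_rw [e2]
  rw [lintegral_mul_const _ (hmi _ _), e1, Real.log_div (by linarith) hp.ne']


/-! ### A BMO function of the first variable and non-membership in `H¹` -/

lemma lintegral_box (a b c d p q : ℝ) (hp : 0 < p) (hpq : p ≤ q) (g : ℝ → ℝ≥0∞) (hg : Measurable g) :
    ∫⁻ x, (Set.Icc a b ×ˢ (Set.Icc c d ×ˢ Set.Icc p q)).indicator (fun x : G => g x.1) x ∂ρG =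
      ENNReal.ofReal (Real.log (q / p)) * (ENNReal.ofReal (d - c) * ∫⁻ x in Set.Icc a b, g x) := by
  have hm : MeasurableSet (Set.Icc a b ×ˢ (Set.Icc c d ×ˢ Set.Icc p q)) :=
    measurableSet_Icc.prod (measurableSet_Icc.prod measurableSet_Icc)
  have hgf : Measurable (fun x : G => g x.1) := hg.comp measurable_fst
  rw [lintegral_rho _ (hgf.indicator hm)]
  have h1 : ∀ s x2 x1 : ℝ, (Set.Icc a b ×ˢ (Set.Icc c d ×ˢ Set.Icc p q)).indicator
      (fun x : G => g x.1)
      (x1, x2, Real.exp s) = (Set.Icc (Real.log p) (Real.log q)).indicator 1 s *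
        ((Set.Icc c d).indicator 1 x2 * (Set.Icc a b).indicator g x1) := by
    intro s x2 x1
    have : s ∈ Set.Icc (Real.log p) (Real.log q) ↔ Real.exp s ∈ Set.Icc p q := by
      rw [Set.mem_Icc, Set.mem_Icc, Real.log_le_iff_le_exp hp, Real.le_log_iff_exp_le (by linarith)]
    simp only [Set.indicator_apply, this, Set.mem_prod, Pi.one_apply]
    split_ifs <;> simp_all
  simp_rw [h1]
  have e1 : ∀ a b : ℝ, ∫⁻ x : ℝ, (Set.Icc a b).indicator (1 : ℝ → ℝ≥0∞) x = ENNReal.ofReal (b - a) := by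
    intro a b
    rw [lintegral_indicator_one measurableSet_Icc, Real.volume_Icc]
  have hmi : ∀ a b : ℝ, Measurable ((Set.Icc a b).indicator (1 : ℝ → ℝ≥0∞)) := fun a b =>
    measurable_one.indicator measurableSet_Icc
  have hmg : Measurable ((Set.Icc a b).indicator g) := hg.indicator measurableSet_Icc
  have e2 : ∀ s : ℝ, ∫⁻ x2 : ℝ, ∫⁻ x1 : ℝ, (Set.Icc (Real.log p) (Real.log q)).indicator (1 : ℝ → ℝ≥0∞) s *
        ((Set.Icc c d).indicator 1 x2 * (Set.Icc a b).indicator g x1) =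
        (Set.Icc (Real.log p) (Real.log q)).indicator 1 s *
          (ENNReal.ofReal (d - c) * ∫⁻ x in Set.Icc a b, g x) := by
    intro s
    rw [← e1 c d, ← lintegral_mul_const _ (hmi _ _), ← lintegral_const_mul _ ((hmi _ _).mul_const _)]
    refine lintegral_congr fun x2 => ?_
    rw [lintegral_const_mul _ (hmg.const_mul _), lintegral_const_mul _ hmg,
      lintegral_indicator measurableSet_Icc]
  simp_rw [e2]
  rw [lintegral_mul_const _ (hmi _ _), e1, Real.log_div (by linarith) hp.ne']

/-- truncated logarithm -/
def hN (N x : ℝ) : ℝ := Real.log (1 + min |x| N)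

lemma hN_diff (N u v : ℝ) (hN0 : 0 ≤ N) (huv : |u| ≤ |v|) :
    0 ≤ hN N v - hN N u ∧ hN N v - hN N u ≤ Real.log (1 + |v|) - Real.log (1 + |u|) := by
  have hu := abs_nonneg u
  have hv := abs_nonneg v
  have h1 : 0 ≤ min |u| N := le_min hu hN0
  have h2 : 0 ≤ min |v| N := le_min hv hN0
  have h3 : min |u| N ≤ min |v| N := min_le_min_right _ huv
  unfold hN
  constructor
  · rw [sub_nonneg]
    exact Real.log_le_log (by linarith) (by linarith)
  · rw [← Real.log_div (by positivity) (by positivity), ← Real.log_div (by positivity) (by positivity)]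
    refine Real.log_le_log (by positivity) ?_
    rw [div_le_div_iff₀ (by positivity) (by positivity)]
    rcases le_total |u| N with h | h <;> rcases le_total |v| N with h' | h' <;>
      simp only [min_eq_left, min_eq_right, h, h'] <;> nlinarith

lemma hN_diff' (N u v : ℝ) (hN0 : 0 ≤ N) (m : ℝ) (hm : 0 ≤ m) (hu : m ≤ |u|) (hv : m ≤ |v|) :
    |hN N v - hN N u| ≤ |(|v| - |u|)| / (1 + m) := by
  have key : ∀ u v : ℝ, m ≤ |u| → |u| ≤ |v| → |hN N v - hN N u| ≤ (|v| - |u|) / (1 + m) := by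
    intro u v hu huv
    obtain ⟨h1, h2⟩ := hN_diff N u v hN0 huv
    rw [abs_of_nonneg h1]
    refine h2.trans ?_
    have hp : 0 < 1 + |u| := by positivity
    rw [← Real.log_div (by positivity) (by positivity)]
    refine (Real.log_le_sub_one_of_pos (by positivity)).trans ?_
    rw [div_sub_one hp.ne']
    rw [show 1 + |v| - (1 + |u|) = |v| - |u| by ring]
    exact div_le_div_of_nonneg_left (by linarith) (by linarith) (by linarith)
  rcases le_total |u| |v| with h | h
  · rw [abs_of_nonneg (show 0 ≤ |v| - |u| by linarith)]
    exact key u v hu h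
  · rw [abs_sub_comm, abs_of_nonpos (show |v| - |u| ≤ 0 by linarith), neg_sub]
    exact key v u hv h

lemma int_log (m : ℝ) (hm : 0 < m) :
    ∫⁻ x in Set.Icc (-m) m, ENNReal.ofReal (Real.log (1 + m) - Real.log (1 + |x|)) ≤
      ENNReal.ofReal (2 * m) := by
  have hc : Continuous fun x : ℝ => Real.log (1 + m) - Real.log (1 + |x|) := by
    refine continuous_const.sub (Continuous.log (by fun_prop) fun x => ?_)
    positivity
  rw [← ofReal_integral_eq_lintegral_ofReal]
  · refine ENNReal.ofReal_le_ofReal ?_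
    rw [integral_Icc_eq_integral_Ioc, ← intervalIntegral.integral_of_le (by linarith),
      ← intervalIntegral.integral_add_adjacent_intervals (b := 0) (hc.intervalIntegrable _ _)
        (hc.intervalIntegrable _ _)]
    have h0 : ∫ x in (-m)..0, (Real.log (1 + m) - Real.log (1 + |x|)) =
        ∫ x in (0:ℝ)..m, (Real.log (1 + m) - Real.log (1 + |x|)) := by
      have := intervalIntegral.integral_comp_neg (a := 0) (b := m)
        (fun x => Real.log (1 + m) - Real.log (1 + |x|))
      simp only [abs_neg, neg_zero] at this
      exact this.symm
    rw [h0]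
    have h1 : ∫ x in (0:ℝ)..m, (Real.log (1 + m) - Real.log (1 + |x|)) =
      (m * Real.log (1 + m) - ((1 + m) * Real.log (1 + m) - (1 + m))) -
      (0 * Real.log (1 + m) - ((1 + 0) * Real.log (1 + 0) - (1 + 0))) := by
      refine intervalIntegral.integral_eq_sub_of_hasDerivAt
        (f := fun x => x * Real.log (1 + m) - ((1 + x) * Real.log (1 + x) - (1 + x))) ?_
        (hc.intervalIntegrable _ _)
      intro x hx
      rw [Set.uIcc_of_le hm.le] at hx
      have hx0 : 0 < 1 + x := by linarith [hx.1]
      rw [abs_of_nonneg hx.1]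
      have e1 : HasDerivAt (fun x : ℝ => 1 + x) 1 x := by
        simpa using (hasDerivAt_id x).const_add 1
      have e2 := (e1.mul (e1.log hx0.ne')).sub e1
      have e3 := ((hasDerivAt_id x).mul_const (Real.log (1 + m))).sub e2
      refine e3.congr_deriv ?_
      field_simp
      ring
    rw [h1]
    have : 0 ≤ Real.log (1 + m) := Real.log_nonneg (by linarith)
    simp
    nlinarith
  · exact (hc.integrableOn_Icc)
  · refine (ae_restrict_iff' measurableSet_Icc).2 (ae_of_all _ fun x hx => ?_)
    have : |x| ≤ m := abs_le.2 hx
    simp only [Pi.zero_apply, sub_nonneg]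
    exact Real.log_le_log (by positivity) (by linarith)

lemma measurable_hN (N : ℝ) : Measurable (hN N) := by
  unfold hN
  exact (((measurable_norm (α := ℝ)).min measurable_const).const_add 1).log

lemma bmo_hN (N : ℝ) (hN0 : 0 ≤ N) (p l : ℝ) (hl : 0 < l) :
    ∃ c, ∫⁻ x in Set.Icc (p - l/2) (p + l/2), ENNReal.ofReal |hN N x - c| ≤
      ENNReal.ofReal (6 * l) := by
  by_cases hp : 2 * l ≤ |p|
  · refine ⟨hN N p, ?_⟩
    calc _ ≤ ∫⁻ x in Set.Icc (p - l/2) (p + l/2), ENNReal.ofReal 1 := by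
          refine setLIntegral_mono' measurableSet_Icc fun x hx => ENNReal.ofReal_le_ofReal ?_
          have h1 : |(|x| - |p|)| ≤ l / 2 := by
            refine (abs_abs_sub_abs_le x p).trans ?_
            rw [abs_le]; constructor <;> linarith [hx.1, hx.2]
          refine (hN_diff' N p x hN0 l hl.le (by linarith) ?_).trans ?_
          · linarith [(abs_le.1 h1).1]
          · rw [div_le_one (by linarith)]; linarith
      _ ≤ _ := by
          rw [setLIntegral_const, Real.volume_Icc, ← ENNReal.ofReal_mul (by norm_num)]
          exact ENNReal.ofReal_le_ofReal (by linarith)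
  · push Not at hp
    refine ⟨hN N (3 * l), ?_⟩
    have h3 : |3 * l| = 3 * l := abs_of_pos (by linarith)
    calc _ ≤ ∫⁻ x in Set.Icc (p - l/2) (p + l/2),
          ENNReal.ofReal (Real.log (1 + 3 * l) - Real.log (1 + |x|)) := by
          refine setLIntegral_mono' measurableSet_Icc fun x hx => ENNReal.ofReal_le_ofReal ?_
          have hx' : |x| ≤ |3 * l| := by
            rw [h3, abs_le]
            have := abs_lt.1 hp
            constructor <;> linarith [hx.1, hx.2]
          obtain ⟨h1, h2⟩ := hN_diff N x (3 * l) hN0 hx'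
          rw [abs_sub_comm, abs_of_nonneg h1]
          rwa [h3] at h2
      _ ≤ ∫⁻ x in Set.Icc (-(3 * l)) (3 * l),
          ENNReal.ofReal (Real.log (1 + 3 * l) - Real.log (1 + |x|)) := by
          refine lintegral_mono_set ?_
          have := abs_lt.1 hp
          exact Set.Icc_subset_Icc (by linarith) (by linarith)
      _ ≤ _ := by
          refine (int_log (3 * l) (by linarith)).trans (ENNReal.ofReal_le_ofReal (by linarith))

lemma hN_bdd (N x : ℝ) (hN0 : 0 ≤ N) : ‖hN N x‖ ≤ Real.log (1 + N) := by
  have h1 : 0 ≤ min |x| N := le_min (abs_nonneg _) hN0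
  unfold hN
  rw [Real.norm_of_nonneg (Real.log_nonneg (by linarith))]
  exact Real.log_le_log (by linarith) (by linarith [min_le_right |x| N])

lemma integrable_mul_hN {A : G → ℝ} (hA : Integrable A ρG) (N : ℝ) (hN0 : 0 ≤ N) :
    Integrable (fun x => A x * hN N x.1) ρG := by
  refine hA.mul_bdd (c := Real.log (1 + N)) ?_ (ae_of_all _ fun x => hN_bdd N _ hN0)
  exact ((measurable_hN N).comp measurable_fst).aestronglyMeasurable

lemma atom_pair {A : G → ℝ} (hA : IsAtomG A) (N : ℝ) (hN0 : 0 ≤ N) :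
    |∫ x, A x * hN N x.1 ∂ρG| ≤ 6 := by
  obtain ⟨hAi, R, ⟨c, L, r, hc, hL, hr, hR, -, -⟩, hsupp, hbd, hzero⟩ := hA
  obtain ⟨k, hk⟩ := bmo_hN N hN0 c.1 L hL
  have e1 : ∫ x, A x * hN N x.1 ∂ρG = ∫ x, A x * (hN N x.1 - k) ∂ρG := by
    simp_rw [mul_sub]
    rw [integral_sub (integrable_mul_hN hAi N hN0) (hAi.mul_const k), integral_mul_const, hzero]
    simp
  have hlp : 0 < c.2.2 * Real.exp (-r) := by positivity
  have hlq : c.2.2 * Real.exp (-r) ≤ c.2.2 * Real.exp r := by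
    gcongr; linarith
  have hlog : 0 < Real.log (c.2.2 * Real.exp r / (c.2.2 * Real.exp (-r))) := by
    refine Real.log_pos ?_
    rw [one_lt_div hlp]
    gcongr; linarith
  have hgm : Measurable fun x : ℝ => ENNReal.ofReal |hN N x - k| :=
    (((measurable_hN N).sub_const k).abs).ennreal_ofReal
  have hRρ := rho_box (c.1 - L/2) (c.1 + L/2) (c.2.1 - L/2) (c.2.1 + L/2) _ _ hlp hlq
  have hRint := lintegral_box (c.1 - L/2) (c.1 + L/2) (c.2.1 - L/2) (c.2.1 + L/2) _ _ hlp hlq _ hgm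
  rw [← hR] at hRρ hRint
  rw [show c.1 + L/2 - (c.1 - L/2) = L by ring] at hRρ
  have hR6 : ∫⁻ x, R.indicator (fun x : G => ENNReal.ofReal |hN N x.1 - k|) x ∂ρG ≤
      ENNReal.ofReal 6 * ρG R := by
    rw [hRint, hRρ]
    calc _ ≤ ENNReal.ofReal (Real.log (c.2.2 * Real.exp r / (c.2.2 * Real.exp (-r)))) *
          (ENNReal.ofReal (c.2.1 + L / 2 - (c.2.1 - L / 2)) * ENNReal.ofReal (6 * L)) := by gcongr
      _ = _ := by rw [ENNReal.ofReal_mul (by norm_num)]; ring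
  have hR0 : ρG R ≠ 0 := by
    rw [hRρ]
    rw [show c.2.1 + L/2 - (c.2.1 - L/2) = L by ring]
    simp [hlog, hL]
  have hRt : ρG R ≠ ⊤ := by
    rw [hRρ]
    exact ENNReal.mul_ne_top ENNReal.ofReal_ne_top (ENNReal.mul_ne_top ENNReal.ofReal_ne_top
      ENNReal.ofReal_ne_top)
  have hae : ∀ᵐ x ∂ρG, ‖A x * (hN N x.1 - k)‖ₑ ≤
      (ρG R)⁻¹ * R.indicator (fun x : G => ENNReal.ofReal |hN N x.1 - k|) x := by
    have h1 : ∀ᵐ x ∂ρG, ‖A x‖ₑ ≤ eLpNormEssSup A ρG := enorm_ae_le_eLpNormEssSup A ρG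
    rw [eLpNorm_exponent_top] at hbd
    filter_upwards [h1] with x hx
    by_cases hxR : x ∈ R
    · rw [Set.indicator_of_mem hxR, enorm_mul]
      gcongr
      · exact hx.trans hbd
      · rw [Real.enorm_eq_ofReal_abs]
    · simp [hsupp x hxR]
  have hfin : ENNReal.ofReal |∫ x, A x * (hN N x.1 - k) ∂ρG| ≤ ENNReal.ofReal 6 := by
    rw [← Real.enorm_eq_ofReal_abs]
    refine (enorm_integral_le_lintegral_enorm _).trans ((lintegral_mono_ae hae).trans ?_)
    rw [lintegral_const_mul' _ _ (ENNReal.inv_ne_top.2 hR0)]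
    calc _ ≤ (ρG R)⁻¹ * (ENNReal.ofReal 6 * ρG R) := by gcongr
      _ = ENNReal.ofReal 6 * ((ρG R)⁻¹ * ρG R) := by ring
      _ = _ := by rw [ENNReal.inv_mul_cancel hR0 hRt, mul_one]
  rw [e1]
  exact (ENNReal.ofReal_le_ofReal_iff (by norm_num)).1 hfin

lemma H1_pair {f : G → ℝ} (hf : MemH1 f) :
    ∃ C : ℝ, ∀ N : ℝ, 0 ≤ N → |∫ x, f x * hN N x.1 ∂ρG| ≤ C := by
  obtain ⟨hfi, lam, A, hA, hsum, hlim⟩ := hf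
  refine ⟨6 * ∑' j, |lam j|, fun N hN0 => ?_⟩
  have hSi : ∀ n : ℕ, Integrable (fun x => ∑ j ∈ Finset.range n, lam j * A j x) ρG := fun n =>
    integrable_finsetSum _ fun j _ => (hA j).1.const_mul _
  have hS : ∀ n : ℕ, |∫ x, (∑ j ∈ Finset.range n, lam j * A j x) * hN N x.1 ∂ρG| ≤
      6 * ∑' j, |lam j| := by
    intro n
    have : ∫ x, (∑ j ∈ Finset.range n, lam j * A j x) * hN N x.1 ∂ρG =
        ∑ j ∈ Finset.range n, lam j * ∫ x, A j x * hN N x.1 ∂ρG := by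
      simp_rw [Finset.sum_mul, mul_assoc]
      rw [integral_finsetSum]
      · refine Finset.sum_congr rfl fun j _ => integral_const_mul _ _
      · exact fun j _ => (integrable_mul_hN (hA j).1 N hN0).const_mul _
    rw [this]
    calc _ ≤ ∑ j ∈ Finset.range n, |lam j * ∫ x, A j x * hN N x.1 ∂ρG| :=
          Finset.abs_sum_le_sum_abs _ _
      _ ≤ ∑ j ∈ Finset.range n, 6 * |lam j| := by
          refine Finset.sum_le_sum fun j _ => ?_
          rw [abs_mul, mul_comm]
          exact mul_le_mul_of_nonneg_right (atom_pair (hA j) N hN0) (abs_nonneg _)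
      _ = 6 * ∑ j ∈ Finset.range n, |lam j| := by rw [Finset.mul_sum]
      _ ≤ _ := by
          have := hsum.sum_le_tsum (Finset.range n) (fun j _ => abs_nonneg _)
          linarith
  have hB : 0 ≤ Real.log (1 + N) := Real.log_nonneg (by linarith)
  have hd : ∀ n : ℕ, ENNReal.ofReal (|∫ x, f x * hN N x.1 ∂ρG| - 6 * ∑' j, |lam j|) ≤
      ENNReal.ofReal (Real.log (1 + N)) *
        eLpNorm (fun x => f x - ∑ j ∈ Finset.range n, lam j * A j x) 1 ρG := by
    intro n
    have h1 : |∫ x, f x * hN N x.1 ∂ρG| - 6 * ∑' j, |lam j| ≤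
        |∫ x, (f x - ∑ j ∈ Finset.range n, lam j * A j x) * hN N x.1 ∂ρG| := by
      simp_rw [sub_mul]
      rw [integral_sub (integrable_mul_hN hfi N hN0) (integrable_mul_hN (hSi n) N hN0)]
      have := abs_sub_abs_le_abs_sub (∫ x, f x * hN N x.1 ∂ρG)
        (∫ x, (∑ j ∈ Finset.range n, lam j * A j x) * hN N x.1 ∂ρG)
      linarith [hS n]
    refine (ENNReal.ofReal_le_ofReal h1).trans ?_
    rw [← Real.enorm_eq_ofReal_abs]
    refine (enorm_integral_le_lintegral_enorm _).trans ?_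
    rw [eLpNorm_one_eq_lintegral_enorm, ← lintegral_const_mul' _ _ ENNReal.ofReal_ne_top]
    refine lintegral_mono fun x => ?_
    rw [enorm_mul, mul_comm]
    gcongr
    rw [← ofReal_norm]
    exact ENNReal.ofReal_le_ofReal (hN_bdd N _ hN0)
  have hl2 := ENNReal.Tendsto.const_mul (a := ENNReal.ofReal (Real.log (1 + N))) hlim
    (Or.inr ENNReal.ofReal_ne_top)
  rw [mul_zero] at hl2
  have := ge_of_tendsto' hl2 hd
  have := ENNReal.ofReal_eq_zero.1 (le_antisymm this bot_le)
  linarith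


/-! ### Pointwise kernel estimates -/

def rr (u : ℝ) : ℝ := Real.log (u + Real.sqrt (u ^ 2 - 1))

def Hh (t u : ℝ) : ℝ :=
  (if rr u = 0 then 1 else rr u / Real.sinh (rr u)) * t ^ (-(3 : ℝ)/2) *
    Real.exp (-(rr u ^ 2) / (4 * t))

def c0 : ℝ := (8 * Real.pi ^ ((3 : ℝ)/2))⁻¹

lemma c0_pos : 0 < c0 := by unfold c0; positivity

lemma heatK_eq (t : ℝ) (y : G) (hy : 0 < y.2.2) :
    heatK t y = c0 * (y.2.2⁻¹ * Hh t (coshArg y)) := by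
  have h1 : Real.sqrt (deltaG y) = y.2.2⁻¹ := by
    unfold deltaG
    rw [Real.sqrt_inv, Real.sqrt_sq hy.le]
  have h2 : rG y = rr (coshArg y) := rfl
  unfold heatK Hh c0
  rw [h1, h2]
  ring

lemma rr_arcosh (u : ℝ) : rr u = Real.arcosh u := rfl

lemma cosh_rr {u : ℝ} (hu : 1 ≤ u) : Real.cosh (rr u) = u := by
  rw [rr_arcosh]; exact Real.cosh_arcosh hu

lemma sinh_rr {u : ℝ} (hu : 1 ≤ u) : Real.sinh (rr u) = Real.sqrt (u ^ 2 - 1) := by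
  rw [rr_arcosh]; exact Real.sinh_arcosh hu

lemma rr_nonneg {u : ℝ} (hu : 1 ≤ u) : 0 ≤ rr u :=
  Real.log_nonneg (by linarith [Real.sqrt_nonneg (u ^ 2 - 1)])

lemma factor_nonneg {r : ℝ} (hr : 0 ≤ r) : 0 ≤ (if r = 0 then 1 else r / Real.sinh r) := by
  split_ifs
  · norm_num
  · exact div_nonneg hr (Real.sinh_nonneg_iff.2 hr)

lemma factor_le {r : ℝ} (hr : 0 ≤ r) : (if r = 0 then 1 else r / Real.sinh r) ≤ 1 := by
  split_ifs with h
  · exact le_refl _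
  · have : 0 < r := lt_of_le_of_ne hr (Ne.symm h)
    rw [div_le_one (Real.sinh_pos_iff.2 this)]
    exact Real.self_le_sinh_iff.2 hr

lemma Hh_nonneg {t u : ℝ} (ht : 0 < t) (hu : 1 ≤ u) : 0 ≤ Hh t u := by
  unfold Hh
  have := factor_nonneg (rr_nonneg hu)
  positivity

lemma Hh_le {t u : ℝ} (ht : 0 < t) (hu : 1 ≤ u) :
    Hh t u ≤ t ^ (-(3 : ℝ)/2) * Real.exp (-(rr u ^ 2) / (4 * t)) := by
  unfold Hh
  rw [mul_assoc]
  exact mul_le_of_le_one_left (by positivity) (factor_le (rr_nonneg hu))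

lemma rr_sq_ge {u : ℝ} (hu : 1 ≤ u) (hu2 : u ≤ 2) : u - 1 ≤ rr u ^ 2 := by
  have h1 : u ≤ Real.exp (rr u ^ 2 / 2) := by
    have := Real.cosh_le_exp_half_sq (rr u)
    rwa [cosh_rr hu] at this
  have h2 : Real.log u ≤ rr u ^ 2 / 2 := by
    rwa [Real.log_le_iff_le_exp (by linarith)]
  have h3 : 1 - u⁻¹ ≤ Real.log u := Real.one_sub_inv_le_log_of_pos (by linarith)
  have h4 : (u - 1) / 2 ≤ 1 - u⁻¹ := by
    rw [show 1 - u⁻¹ = (u - 1) / u by field_simp]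
    exact div_le_div_of_nonneg_left (by linarith) (by linarith) hu2
  linarith

lemma log_le_rr {u : ℝ} (hu : 1 ≤ u) : Real.log u ≤ rr u :=
  Real.log_le_log (by linarith) (by linarith [Real.sqrt_nonneg (u ^ 2 - 1)])

def Gg (t r : ℝ) : ℝ := r * (t ^ (-(3 : ℝ)/2) * Real.exp (-(r ^ 2) / (4 * t)))

lemma half_le_log {u : ℝ} (hu : 2 ≤ u) : 1 / 2 ≤ Real.log u := by
  have h1 := Real.log_two_gt_d9
  have h2 := Real.log_le_log (by norm_num) hu
  linarith

lemma Hh_eq {t u : ℝ} (hu : 2 ≤ u) : Hh t u = Gg t (rr u) / Real.sqrt (u ^ 2 - 1) := by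
  have h1 : 0 < rr u := by linarith [half_le_log hu, log_le_rr (u := u) (by linarith)]
  unfold Hh Gg
  rw [if_neg h1.ne', sinh_rr (by linarith)]
  ring

lemma sqrt_ge {u : ℝ} (hu : 2 ≤ u) : u / 2 ≤ Real.sqrt (u ^ 2 - 1) := by
  apply Real.le_sqrt_of_sq_le
  nlinarith

lemma tpow {t : ℝ} (ht : 0 < t) : t ^ (-(3 : ℝ)/2) = (Real.sqrt t ^ 3)⁻¹ := by
  rw [Real.sqrt_eq_rpow, ← Real.rpow_natCast, ← Real.rpow_mul ht.le, ← Real.rpow_neg ht.le]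
  norm_num

/-- the basic bound, `i = 0, 1`. -/
lemma base_bound {t r : ℝ} (ht : 0 < t) (hr : 0 < r) :
    t ^ (-(3 : ℝ)/2) * Real.exp (-(r ^ 2) / (4 * t)) ≤ 8 / r ^ 3 ∧
    t ^ (-(3 : ℝ)/2) * Real.exp (-(r ^ 2) / (4 * t)) * (r ^ 2 / (4 * t)) ≤ 32 / r ^ 3 := by
  set τ := Real.sqrt t with hτ
  have hτ0 : 0 < τ := Real.sqrt_pos.2 ht
  have htt : t = τ ^ 2 := (Real.sq_sqrt ht.le).symm
  set q := r / (2 * τ) with hq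
  have hq0 : 0 < q := by positivity
  have hv : r ^ 2 / (4 * t) = q ^ 2 := by rw [hq, htt]; field_simp; norm_num
  have e1 : t ^ (-(3 : ℝ)/2) = 8 * q ^ 3 / r ^ 3 := by
    rw [tpow ht, ← hτ, hq]; field_simp; norm_num
  rw [neg_div (4 * t) (r ^ 2), hv, e1, Real.exp_neg]
  have p1 := Real.pow_div_factorial_le_exp (q ^ 2) (by positivity) 1
  have p2 := Real.pow_div_factorial_le_exp (q ^ 2) (by positivity) 2
  have p3 := Real.pow_div_factorial_le_exp (q ^ 2) (by positivity) 3
  simp only [Nat.factorial] at p1 p2 p3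
  norm_num at p1 p2 p3
  have hE := Real.exp_pos (q ^ 2)
  constructor
  · rw [mul_inv_le_iff₀ hE, div_mul_eq_mul_div, div_le_div_iff_of_pos_right (by positivity)]
    have p4 := Real.quadratic_le_exp_of_nonneg (x := q ^ 2) (by positivity)
    nlinarith [sq_nonneg (q * (q - 1))]
  · rw [mul_right_comm, mul_inv_le_iff₀ hE, div_mul_eq_mul_div, div_mul_eq_mul_div,
      div_le_div_iff_of_pos_right (by positivity)]
    nlinarith [sq_nonneg (q ^ 2 * (q - 1))]

lemma Gg_nonneg {t r : ℝ} (ht : 0 < t) (hr : 0 ≤ r) : 0 ≤ Gg t r := by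
  unfold Gg; positivity

lemma Gg_le {t r : ℝ} (ht : 0 < t) (hr : 0 < r) : Gg t r ≤ 8 / r ^ 2 := by
  unfold Gg
  calc _ ≤ r * (8 / r ^ 3) := by gcongr; exact (base_bound ht hr).1
    _ = _ := by field_simp

lemma Gg_deriv {t : ℝ} (ht : 0 < t) (r : ℝ) :
    HasDerivAt (Gg t) (t ^ (-(3 : ℝ)/2) * Real.exp (-(r ^ 2) / (4 * t)) -
      2 * (t ^ (-(3 : ℝ)/2) * Real.exp (-(r ^ 2) / (4 * t)) * (r ^ 2 / (4 * t)))) r := by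
  have h1 : HasDerivAt (fun r : ℝ => -(r ^ 2) / (4 * t)) (-(2 * r) / (4 * t)) r := by
    have := ((hasDerivAt_pow 2 r).neg).div_const (4 * t)
    simpa using this
  have h2 := (hasDerivAt_id r).mul (h1.exp.const_mul (t ^ (-(3 : ℝ)/2)))
  refine h2.congr_deriv ?_
  simp only [id]
  field_simp
  ring

lemma Gg_diff {t r r' : ℝ} (ht : 0 < t) (hr : 0 < r) (hrr : r ≤ r') :
    |Gg t r - Gg t r'| ≤ 72 / r ^ 3 * (r' - r) := by
  have := Convex.norm_image_sub_le_of_norm_hasDerivWithin_le (f := Gg t) (s := Set.Icc r r')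
    (C := 72 / r ^ 3) (x := r') (y := r)
    (fun x hx => (Gg_deriv ht x).hasDerivWithinAt) ?_ (convex_Icc _ _)
    (Set.right_mem_Icc.2 hrr) (Set.left_mem_Icc.2 hrr)
  · rw [Real.norm_eq_abs, Real.norm_eq_abs, abs_sub_comm r r',
      abs_of_nonneg (show 0 ≤ r' - r by linarith)] at this
    exact this
  · intro x hx
    have hx0 : 0 < x := lt_of_lt_of_le hr hx.1
    obtain ⟨b1, b2⟩ := base_bound ht hx0
    have n1 : 0 ≤ t ^ (-(3 : ℝ)/2) * Real.exp (-(x ^ 2) / (4 * t)) := by positivity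
    have n2 : 0 ≤ t ^ (-(3 : ℝ)/2) * Real.exp (-(x ^ 2) / (4 * t)) * (x ^ 2 / (4 * t)) := by
      positivity
    have h3 : 72 / x ^ 3 ≤ 72 / r ^ 3 := by
      have := hx.1
      gcongr
    have h4 : 72 / x ^ 3 = 8 / x ^ 3 + 2 * (32 / x ^ 3) := by ring
    rw [Real.norm_eq_abs, abs_le]
    constructor <;> linarith

lemma Hh_diff {t u u' : ℝ} (ht : 0 < t) (hu : 2 ≤ u) (huu : u ≤ u') :
    |Hh t u - Hh t u'| ≤ 1000 * ((u' - u) / (u ^ 2 * Real.log u ^ 2)) := by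
  have hu' : 2 ≤ u' := hu.trans huu
  set S := Real.sqrt (u ^ 2 - 1) with hS
  set S' := Real.sqrt (u' ^ 2 - 1) with hS'
  have s1 : u / 2 ≤ S := sqrt_ge hu
  have s1' : u' / 2 ≤ S' := sqrt_ge hu'
  have s2 : S ^ 2 = u ^ 2 - 1 := Real.sq_sqrt (by nlinarith)
  have s2' : S' ^ 2 = u' ^ 2 - 1 := Real.sq_sqrt (by nlinarith)
  have hSS : S ≤ S' := Real.sqrt_le_sqrt (by nlinarith)
  have hSd : S' - S ≤ 2 * (u' - u) := by
    have : (S' - S) * (S' + S) = (u' - u) * (u' + u) := by nlinarith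
    nlinarith
  have hl := half_le_log hu
  have hlr := log_le_rr (u := u) (by linarith)
  set r := rr u with hr
  set r' := rr u' with hr'
  have hr0 : 1 / 2 ≤ r := hl.trans hlr
  have hrr : r ≤ r' := Real.log_le_log (by linarith) (by linarith)
  have hrd : r' - r ≤ 3 * (u' - u) / u := by
    have : r' - r = Real.log ((u' + S') / (u + S)) := by
      rw [Real.log_div (by linarith) (by linarith)]; rfl
    rw [this]
    refine (Real.log_le_sub_one_of_pos (div_pos (by linarith) (by linarith))).trans ?_
    rw [div_sub_one (by linarith)]
    exact div_le_div₀ (by linarith) (by linarith) (by linarith) (by linarith)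
  rw [Hh_eq hu, Hh_eq hu']
  have hd0 : 0 ≤ u' - u := by linarith
  have hG := Gg_diff ht (show 0 < r by linarith) hrr
  have hG' : Gg t r' ≤ 8 / r ^ 2 :=
    (Gg_le ht (show 0 < r' by linarith)).trans (by gcongr)
  have hGn : 0 ≤ Gg t r' := Gg_nonneg ht (by linarith)
  have hSp : 0 < S := by linarith
  have hSp' : 0 < S' := by linarith
  have hup : 0 < u := by linarith
  have hup' : 0 < u' := by linarith
  have hrp : 0 < r := by linarith
  have e : Gg t r / S - Gg t r' / S' = (Gg t r - Gg t r') / S + Gg t r' * ((S' - S) / (S * S')) := by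
    field_simp; ring
  rw [e]
  have t1 : |(Gg t r - Gg t r') / S| ≤ 864 * ((u' - u) / (u ^ 2 * r ^ 2)) := by
    rw [abs_div, abs_of_pos hSp]
    calc _ ≤ (72 / r ^ 3 * (3 * (u' - u) / u)) / (u / 2) := by
          refine div_le_div₀ (by positivity) (hG.trans ?_) (by positivity) s1
          gcongr
      _ = 432 * ((u' - u) / (u ^ 2 * r ^ 2)) * (1 / r) := by field_simp; ring
      _ ≤ 432 * ((u' - u) / (u ^ 2 * r ^ 2)) * 2 := by
          gcongr
          rw [div_le_iff₀ hrp]; linarith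
      _ = _ := by ring
  have t2 : |Gg t r' * ((S' - S) / (S * S'))| ≤ 64 * ((u' - u) / (u ^ 2 * r ^ 2)) := by
    rw [abs_of_nonneg (mul_nonneg hGn (div_nonneg (by linarith) (by positivity)))]
    calc _ ≤ 8 / r ^ 2 * ((2 * (u' - u)) / (u / 2 * (u / 2))) := by
          refine mul_le_mul hG' (div_le_div₀ (by positivity) hSd (by positivity) ?_)
            (div_nonneg (by linarith) (by positivity)) (by positivity)
          exact mul_le_mul s1 (by linarith) (by positivity) (by linarith)
      _ = _ := by field_simp; ring
  calc _ ≤ _ := abs_add_le _ _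
    _ ≤ 864 * ((u' - u) / (u ^ 2 * r ^ 2)) + 64 * ((u' - u) / (u ^ 2 * r ^ 2)) := add_le_add t1 t2
    _ = 928 * ((u' - u) / (u ^ 2 * r ^ 2)) := by ring
    _ ≤ 1000 * ((u' - u) / (u ^ 2 * Real.log u ^ 2)) := by
        have hl0 : 0 < Real.log u := by linarith
        gcongr
        norm_num

lemma Hh_diff' {t u u' : ℝ} (ht : 0 < t) (hu : 2 ≤ u) (hu' : 2 ≤ u') (h4 : u ≤ 4 * u') :
    |Hh t u' - Hh t u| ≤ 144000 * (|u' - u| / (u ^ 2 * Real.log u ^ 2)) := by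
  have hl := half_le_log hu
  have hl' := half_le_log hu'
  rcases le_total u u' with h | h
  · rw [abs_sub_comm, abs_of_nonneg (show 0 ≤ u' - u by linarith)]
    refine (Hh_diff ht hu h).trans ?_
    have : 0 ≤ (u' - u) / (u ^ 2 * Real.log u ^ 2) := div_nonneg (by linarith) (by positivity)
    linarith
  · rw [abs_sub_comm u' u, abs_of_nonneg (show 0 ≤ u - u' by linarith)]
    refine (Hh_diff ht hu' h).trans ?_
    have hlog : Real.log u ≤ 3 * Real.log u' := by
      have h1 : Real.log u ≤ Real.log (4 * u') := Real.log_le_log (by linarith) h4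
      rw [Real.log_mul (by norm_num) (by linarith), show (4:ℝ) = 2 ^ 2 by norm_num, Real.log_pow] at h1
      have h2 : Real.log 2 ≤ Real.log u' := Real.log_le_log (by norm_num) hu'
      push_cast at h1
      linarith
    have hd : 0 ≤ u - u' := by linarith
    calc 1000 * ((u - u') / (u' ^ 2 * Real.log u' ^ 2))
        ≤ 1000 * ((u - u') / ((u / 4) ^ 2 * (Real.log u / 3) ^ 2)) := by
          gcongr <;> linarith
      _ = _ := by
          have : 0 < Real.log u := by linarith
          have : 0 < u := by linarith
          field_simp; ring

lemma Hh_le' {t u : ℝ} (ht : 0 < t) (hu : 2 ≤ u) : Hh t u ≤ 16 / (u * Real.log u ^ 2) := by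
  have hl := half_le_log hu
  have hlr := log_le_rr (u := u) (by linarith)
  rw [Hh_eq hu]
  calc _ ≤ (8 / Real.log u ^ 2) / (u / 2) := by
        refine div_le_div₀ (by positivity) ((Gg_le ht (by linarith)).trans ?_) (by linarith) (sqrt_ge hu)
        gcongr
    _ = _ := by
        have : 0 < Real.log u := by linarith
        have : 0 < u := by linarith
        field_simp; norm_num


/-! ### The dominating function -/

def mm (a : ℝ) : ℝ := max 1 a

def kern (z1 z2 s : ℝ) : ℝ :=
  (1 + z1 ^ 2 + z2 ^ 2)⁻¹ * ((1 + Real.log (1 + |z1|)) ^ 2 + s ^ 2)⁻¹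

def Phi0 (y : G) : ℝ :=
  (mm y.2.2 ^ 2)⁻¹ * kern (y.1 / mm y.2.2) (y.2.1 / mm y.2.2) (Real.log y.2.2)

def Wt (L z : ℝ) : ℝ := if |z| ≤ 3 * L then 1 else 3 * L / |z|

def Psi (L : ℝ) (y : G) : ℝ := c0 * 18000000 * (Phi0 y * Wt L (y.1 / mm y.2.2))

def Pt (t : ℝ) (y : G) : ℝ := if 2 ≤ coshArg y then heatK t y else 0

lemma mm_ge_one (a : ℝ) : 1 ≤ mm a := le_max_left _ _

lemma mm_pos (a : ℝ) : 0 < mm a := lt_of_lt_of_le one_pos (mm_ge_one a)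

lemma mm_sq_le (a : ℝ) : mm a ^ 2 ≤ 1 + a ^ 2 := by
  unfold mm
  rcases le_total 1 a with h | h
  · rw [max_eq_right h]; nlinarith
  · rw [max_eq_left h]; nlinarith [sq_nonneg a]

lemma mm_exp (a : ℝ) (ha : 0 < a) : Real.exp |Real.log a| = mm a ^ 2 / a := by
  unfold mm
  rcases le_total 1 a with h | h
  · rw [max_eq_right h, abs_of_nonneg (Real.log_nonneg h), Real.exp_log ha]
    field_simp
  · rw [max_eq_left h, abs_of_nonpos (Real.log_nonpos ha.le h), Real.exp_neg, Real.exp_log ha]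
    field_simp

lemma coshArg_eq (y : G) (hy : 0 < y.2.2) :
    coshArg y = (1 + y.2.2 ^ 2 + y.1 ^ 2 + y.2.1 ^ 2) / (2 * y.2.2) := by
  unfold coshArg
  field_simp
  ring

lemma one_le_coshArg (y : G) (hy : 0 < y.2.2) : 1 ≤ coshArg y := by
  rw [coshArg_eq y hy, le_div_iff₀ (by positivity)]
  nlinarith [sq_nonneg (y.2.2 - 1), sq_nonneg y.1, sq_nonneg y.2.1]

lemma log_one_add_abs_nonneg (z : ℝ) : 0 ≤ Real.log (1 + |z|) :=
  Real.log_nonneg (by linarith [abs_nonneg z])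

lemma kern_pos (z1 z2 s : ℝ) : 0 < kern z1 z2 s := by
  have := log_one_add_abs_nonneg z1
  unfold kern; positivity

lemma Phi0_pos (y : G) : 0 < Phi0 y := by
  have := kern_pos (y.1 / mm y.2.2) (y.2.1 / mm y.2.2) (Real.log y.2.2)
  have := mm_pos y.2.2
  unfold Phi0; positivity

lemma Phi0_ge (y : G) (hy : 0 < y.2.2) (hu : 2 ≤ coshArg y) :
    (y.2.2 * coshArg y * Real.log (coshArg y) ^ 2)⁻¹ ≤ 50 * Phi0 y := by
  set a := y.2.2 with ha
  set u := coshArg y with hu0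
  set m := mm a with hm
  have hm1 : 1 ≤ m := mm_ge_one a
  have hm2 : m ^ 2 ≤ 1 + a ^ 2 := mm_sq_le a
  set z1 := y.1 / m with hz1
  set z2 := y.2.1 / m with hz2
  have hmp : 0 < m := by linarith
  have e1 : y.1 = m * z1 := by rw [hz1]; field_simp
  have e2 : y.2.1 = m * z2 := by rw [hz2]; field_simp
  have hau : a * u = (1 + a ^ 2 + y.1 ^ 2 + y.2.1 ^ 2) / 2 := by
    rw [hu0, coshArg_eq y hy, ← ha]; field_simp
  have h1 : m ^ 2 * (1 + z1 ^ 2 + z2 ^ 2) / 2 ≤ a * u := by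
    rw [hau, e1, e2]; nlinarith
  have hl := half_le_log hu
  have hu4 : Real.exp |Real.log a| * (1 + |z1|) ≤ 4 * u := by
    rw [mm_exp a hy, ← hm, div_mul_eq_mul_div, div_le_iff₀ hy]
    have h3 : (1 + |z1|) ≤ 2 * (1 + z1 ^ 2) := by
      nlinarith [sq_abs z1, sq_nonneg (|z1| - 1)]
    have h4 : m ^ 2 * (1 + |z1|) ≤ m ^ 2 * (2 * (1 + z1 ^ 2 + z2 ^ 2)) := by
      gcongr; nlinarith [sq_nonneg z2]
    nlinarith
  have hlog4 : |Real.log a| + Real.log (1 + |z1|) ≤ 3 * Real.log u := by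
    have h5 := Real.log_le_log (by positivity) hu4
    rw [Real.log_mul (by positivity) (by positivity), Real.log_exp,
      Real.log_mul (by norm_num) (by linarith), show (4:ℝ) = 2 ^ 2 by norm_num, Real.log_pow] at h5
    have h6 : Real.log 2 ≤ Real.log u := Real.log_le_log (by norm_num) hu
    push_cast at h5
    linarith
  have hz := log_one_add_abs_nonneg z1
  have h7 : ((1 + Real.log (1 + |z1|)) ^ 2 + Real.log a ^ 2) / 25 ≤ Real.log u ^ 2 := by
    have h8 : 1 + Real.log (1 + |z1|) + |Real.log a| ≤ 5 * Real.log u := by linarith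
    have h9 := abs_nonneg (Real.log a)
    have h10 : (1 + Real.log (1 + |z1|) + |Real.log a|) ^ 2 ≤ (5 * Real.log u) ^ 2 := by
      gcongr
    rw [← sq_abs (Real.log a)]
    nlinarith [mul_nonneg (show 0 ≤ 1 + Real.log (1 + |z1|) by linarith) h9]
  calc (a * u * Real.log u ^ 2)⁻¹
      ≤ (m ^ 2 * (1 + z1 ^ 2 + z2 ^ 2) / 2 *
          (((1 + Real.log (1 + |z1|)) ^ 2 + Real.log a ^ 2) / 25))⁻¹ := by
        gcongr
    _ = 50 * Phi0 y := by
        unfold Phi0 kern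
        rw [← ha, ← hm, ← hz1, ← hz2]
        field_simp
        norm_num

lemma heatK_nonneg {t : ℝ} (ht : 0 < t) (y : G) (hy : 0 < y.2.2) : 0 ≤ heatK t y := by
  rw [heatK_eq t y hy]
  have := Hh_nonneg ht (one_le_coshArg y hy)
  have := c0_pos
  positivity

lemma Pt_nonneg {t : ℝ} (ht : 0 < t) (y : G) (hy : 0 < y.2.2) : 0 ≤ Pt t y := by
  unfold Pt
  split_ifs
  · exact heatK_nonneg ht y hy
  · exact le_refl _

lemma Pt_le {t : ℝ} (ht : 0 < t) (y : G) (hy : 0 < y.2.2) : Pt t y ≤ c0 * 800 * Phi0 y := by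
  have hc := c0_pos
  have hP := Phi0_pos y
  unfold Pt
  split_ifs with hu
  · rw [heatK_eq t y hy]
    have hl := half_le_log hu
    have h1 := Hh_le' ht hu
    have h2 := Phi0_ge y hy hu
    calc _ ≤ c0 * (y.2.2⁻¹ * (16 / (coshArg y * Real.log (coshArg y) ^ 2))) := by gcongr
      _ = c0 * 16 * (y.2.2 * coshArg y * Real.log (coshArg y) ^ 2)⁻¹ := by
          rw [mul_assoc y.2.2, mul_inv, div_eq_mul_inv]; ring
      _ ≤ c0 * 16 * (50 * Phi0 y) := by gcongr
      _ = _ := by ring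
  · positivity

lemma Wt_pos {L z : ℝ} (hL : 0 < L) : 0 < Wt L z := by
  unfold Wt
  split_ifs with h
  · exact one_pos
  · have : 0 < |z| := by linarith
    positivity

lemma Psi_nonneg {L : ℝ} (hL : 0 < L) (y : G) : 0 ≤ Psi L y := by
  have := c0_pos
  have := Phi0_pos y
  have := Wt_pos (z := y.1 / mm y.2.2) hL
  unfold Psi; positivity

set_option maxHeartbeats 2000000 in
lemma Pt_diff {t L k : ℝ} (ht : 0 < t) (hL : 2 ≤ L) (y : G) (hy : 0 < y.2.2)
    (hk0 : 0 ≤ k * y.2.2) (hkL : k * y.2.2 ≤ L) :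
    |Pt t (shear k y) - Pt t y| ≤ Psi L (shear k y) + Psi L y := by
  have hc := c0_pos
  set y' := shear k y with hy'
  have ey2 : y'.2 = y.2 := rfl
  have ey1 : y'.1 = y.1 - k * y.2.2 := rfl
  have hyp' : 0 < y'.2.2 := hy
  set l := k * y.2.2 with hl
  set a := y.2.2 with ha
  set m := mm a with hm
  have hm1 : 1 ≤ m := mm_ge_one a
  have hmp : 0 < m := by linarith
  by_cases hz : |y.1 / m| ≤ 2 * L
  · have hz' : |y'.1 / m| ≤ 3 * L := by
      rw [ey1, sub_div]
      have h1 : |l / m| ≤ L := by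
        rw [abs_of_nonneg (by positivity), div_le_iff₀ hmp]; nlinarith
      linarith [abs_sub (y.1 / m) (l / m)]
    have w1 : Wt L (y.1 / m) = 1 := by
      unfold Wt; rw [if_pos (by linarith)]
    have w2 : Wt L (y'.1 / m) = 1 := by
      unfold Wt; rw [if_pos hz']
    have p1 := Pt_le ht y hy
    have p2 := Pt_le ht y' hyp'
    have n1 := Pt_nonneg ht y hy
    have n2 := Pt_nonneg ht y' hyp'
    have f1 := Phi0_pos y
    have f2 := Phi0_pos y'
    have q1 : c0 * 800 * Phi0 y ≤ Psi L y := by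
      unfold Psi; rw [← ha, ← hm, w1, mul_one]; gcongr; norm_num
    have q2 : c0 * 800 * Phi0 y' ≤ Psi L y' := by
      unfold Psi; rw [ey2, ← ha, ← hm, w2, mul_one]; gcongr; norm_num
    rw [abs_le]; constructor <;> linarith
  · push Not at hz
    have hza : |y.1 / m| = |y.1| / m := by rw [abs_div, abs_of_pos hmp]
    have hy1 : 2 * L * m < |y.1| := by rwa [hza, lt_div_iff₀ hmp] at hz
    have hy1L : 2 * L < |y.1| := by nlinarith
    have hy0 : 0 < |y.1| := by linarith
    have hua := coshArg_eq y hy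
    have hua' := coshArg_eq y' hyp'
    rw [ey2, ey1, ← ha] at hua'
    rw [← ha] at hua
    set u := coshArg y with hu
    set u' := coshArg y' with hu'
    set D := 1 + a ^ 2 + y.1 ^ 2 + y.2.1 ^ 2 with hD
    have habs : l ≤ |y.1| / 2 := by linarith
    have hsq : |y.1| ^ 2 = y.1 ^ 2 := sq_abs _
    have hl2 : |y.1| / 2 ≤ |y.1 - l| := by
      have := abs_sub_abs_le_abs_sub y.1 l
      rw [abs_of_nonneg hk0] at this
      linarith
    have hsq' : y.1 ^ 2 / 4 ≤ (y.1 - l) ^ 2 := by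
      rw [← sq_abs (y.1 - l), ← hsq]
      nlinarith
    have h4 : u ≤ 4 * u' := by
      rw [hua, hua', ← mul_div_assoc]
      gcongr
      nlinarith [sq_nonneg a, sq_nonneg y.2.1]
    have hu8 : 8 ≤ u := by
      rw [hua, le_div_iff₀ (by positivity)]
      have h5 : a ≤ m := le_max_right _ _
      have h6 : 16 * m ≤ y.1 ^ 2 := by
        rw [← hsq]
        have : 4 * m ≤ |y.1| := by nlinarith
        nlinarith
      nlinarith [sq_nonneg a, sq_nonneg y.2.1]
    have hu2 : 2 ≤ u := by linarith
    have hu2' : 2 ≤ u' := by linarith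
    have hdiff := Hh_diff' ht hu2 hu2' h4
    have hP := Phi0_ge y hy hu2
    rw [← ha, ← hu] at hP
    have hlog := half_le_log hu2
    have hrel : |u' - u| / u ≤ 5 / 2 * (L / |y.1 / m|) := by
      have hup : 0 < u := by linarith
      rw [div_le_iff₀ hup]
      have e : u' - u = (l * (l - 2 * y.1)) / (2 * a) := by
        rw [hua, hua', ← sub_div]; congr 1; ring
      rw [e, abs_div, abs_of_pos (show 0 < 2 * a by positivity), hua, ← mul_div_assoc]
      gcongr
      rw [abs_mul, abs_of_nonneg hk0]
      have h7 : |l - 2 * y.1| ≤ 5 / 2 * |y.1| := by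
        have := abs_sub l (2 * y.1)
        rw [abs_of_nonneg hk0, abs_mul, abs_two] at this
        linarith
      have h8 : L / |y.1| ≤ L / |y.1 / m| := by
        rw [hza]
        have : |y.1| / m ≤ |y.1| := div_le_self (abs_nonneg _) hm1
        gcongr
      calc l * |l - 2 * y.1| ≤ L * (5 / 2 * |y.1|) := by gcongr
        _ = 5 / 2 * (L / |y.1|) * |y.1| ^ 2 := by field_simp
        _ ≤ 5 / 2 * (L / |y.1 / m|) * D := by
            gcongr
            rw [hsq, hD]; nlinarith [sq_nonneg a, sq_nonneg y.2.1]
    have hW : L / |y.1 / m| ≤ Wt L (y.1 / m) := by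
      unfold Wt
      have : 0 < |y.1 / m| := by linarith
      split_ifs with h
      · rw [div_le_one this]; linarith
      · gcongr; linarith
    have key : |Pt t y' - Pt t y| ≤ Psi L y := by
      unfold Pt
      rw [if_pos hu2, if_pos hu2', heatK_eq t y hy, heatK_eq t y' hyp', ey2, ← ha, ← hu, ← hu',
        ← mul_sub, ← mul_sub, abs_mul, abs_mul, abs_of_pos hc, abs_of_pos (inv_pos.2 hy)]
      have hup : 0 < u := by linarith
      calc c0 * (a⁻¹ * |Hh t u' - Hh t u|)
          ≤ c0 * (a⁻¹ * (144000 * (|u' - u| / (u ^ 2 * Real.log u ^ 2)))) := by gcongr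
        _ = c0 * 144000 * (|u' - u| / u * (a * u * Real.log u ^ 2)⁻¹) := by
            have : 0 < Real.log u := by linarith
            field_simp
        _ ≤ c0 * 144000 * (5 / 2 * (L / |y.1 / m|) * (50 * Phi0 y)) := by gcongr
        _ ≤ c0 * 144000 * (5 / 2 * (Wt L (y.1 / m)) * (50 * Phi0 y)) := by
            have := Phi0_pos y
            gcongr
        _ = Psi L y := by unfold Psi; rw [← ha, ← hm]; ring
    linarith [Psi_nonneg (show 0 < L by linarith) y']

lemma measurable_Wt (L : ℝ) : Measurable (Wt L) := by
  unfold Wt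
  refine Measurable.ite ?_ measurable_const (by fun_prop)
  exact measurableSet_le (by fun_prop) measurable_const

lemma measurable_mm : Measurable mm := by
  unfold mm; fun_prop

lemma measurable_Psi (L : ℝ) : Measurable (Psi L) := by
  have h1 : Measurable fun y : G => mm y.2.2 := measurable_mm.comp (by fun_prop)
  have h2 : Measurable fun y : G => y.1 / mm y.2.2 := by fun_prop
  have h3 : Measurable fun y : G => y.2.1 / mm y.2.2 := by fun_prop
  have h4 : Measurable fun y : G => Wt L (y.1 / mm y.2.2) := (measurable_Wt L).comp h2
  unfold Psi Phi0 kern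
  fun_prop

lemma measurable_coshArg : Measurable coshArg := by unfold coshArg; fun_prop

lemma measurable_rG : Measurable rG := by
  have := measurable_coshArg
  unfold rG; fun_prop

lemma measurable_heatK (t : ℝ) : Measurable (heatK t) := by
  have h := measurable_rG
  have h2 : Measurable fun x : G => (if rG x = 0 then 1 else rG x / Real.sinh (rG x)) :=
    Measurable.ite (measurableSet_eq_fun h measurable_const) measurable_const (by fun_prop)
  have h3 : Measurable deltaG := by unfold deltaG; fun_prop
  unfold heatK
  fun_prop

lemma measurable_Pt (t : ℝ) : Measurable (Pt t) := by
  unfold Pt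
  exact Measurable.ite (measurableSet_le measurable_const measurable_coshArg) (measurable_heatK t)
    measurable_const


/-! ### Integral of the dominating function -/

lemma lint_scale (F : ℝ → ℝ≥0∞) (hF : Measurable F) (m : ℝ) (hm : 0 < m) :
    ENNReal.ofReal m⁻¹ * ∫⁻ x, F (x / m) = ∫⁻ x, F x := by
  have h := Real.smul_map_volume_mul_right (a := m⁻¹) (inv_ne_zero hm.ne')
  rw [abs_of_pos (inv_pos.2 hm)] at h
  conv_rhs => rw [← h]
  rw [lintegral_smul_measure, lintegral_map hF (by fun_prop)]
  simp only [div_eq_mul_inv, smul_eq_mul]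

lemma lint_cauchy (A : ℝ) (hA : 0 < A) :
    ∫⁻ x : ℝ, ENNReal.ofReal ((A ^ 2 + x ^ 2)⁻¹) = ENNReal.ofReal (π / A) := by
  have h1 : ∫⁻ x : ℝ, ENNReal.ofReal ((1 + x ^ 2)⁻¹) = ENNReal.ofReal π := by
    rw [← integral_univ_inv_one_add_sq, ofReal_integral_eq_lintegral_ofReal integrable_inv_one_add_sq]
    exact Eventually.of_forall fun x => by positivity
  have h2 := lint_scale (fun x => ENNReal.ofReal ((1 + x ^ 2)⁻¹)) (by fun_prop) A hA
  rw [h1] at h2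
  have : ∀ x : ℝ, ENNReal.ofReal ((A ^ 2 + x ^ 2)⁻¹)
      = ENNReal.ofReal A⁻¹ * (ENNReal.ofReal A⁻¹ * ENNReal.ofReal ((1 + (x / A) ^ 2)⁻¹)) := by
    intro x
    rw [← ENNReal.ofReal_mul (by positivity), ← ENNReal.ofReal_mul (by positivity)]
    congr 1
    field_simp
  simp_rw [this]
  rw [lintegral_const_mul _ (by fun_prop), lintegral_const_mul _ (by fun_prop), h2,
    ← ENNReal.ofReal_mul (by positivity)]
  congr 1; field_simp

lemma lint_loglog (M : ℝ) (hM : 0 ≤ M) :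
    ∫⁻ x in Ioc 0 M, ENNReal.ofReal (((1 + x) * (1 + Real.log (1 + x)))⁻¹)
      = ENNReal.ofReal (Real.log (1 + Real.log (1 + M))) := by
  have hd : ∀ x ∈ uIcc 0 M, HasDerivAt (fun x => Real.log (1 + Real.log (1 + x)))
      (((1 + x) * (1 + Real.log (1 + x)))⁻¹) x := by
    intro x hx
    rw [uIcc_of_le hM] at hx
    have h1 : 0 < 1 + x := by linarith [hx.1]
    have h2 : 0 ≤ Real.log (1 + x) := Real.log_nonneg (by linarith [hx.1])
    have := ((((hasDerivAt_id x).const_add 1).log h1.ne').const_add 1).log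
      (show 1 + Real.log (1 + x) ≠ 0 by linarith)
    convert this using 1
    · rfl
    · rw [mul_inv, div_eq_mul_inv, one_div]
      rfl
  have hc : ContinuousOn (fun x => ((1 + x) * (1 + Real.log (1 + x)))⁻¹) (uIcc 0 M) := by
    rw [uIcc_of_le hM]
    have hp : ∀ x ∈ Icc 0 M, 1 + x ≠ 0 := fun x hx => by linarith [hx.1]
    refine ContinuousOn.inv₀ ?_ ?_
    · refine ContinuousOn.mul (by fun_prop) ?_
      exact continuousOn_const.add (ContinuousOn.log (by fun_prop) hp)
    · intro x hx
      have h1 : 0 < 1 + x := by linarith [hx.1]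
      have h2 : 0 ≤ Real.log (1 + x) := Real.log_nonneg (by linarith [hx.1])
      positivity
  have hi := hc.intervalIntegrable (μ := volume)
  have := intervalIntegral.integral_eq_sub_of_hasDerivAt hd hi
  rw [intervalIntegral.integral_of_le hM] at this
  simp only [add_zero, Real.log_one, sub_zero] at this
  rw [← this, ofReal_integral_eq_lintegral_ofReal]
  · exact (intervalIntegrable_iff_integrableOn_Ioc_of_le hM).1 hi
  · refine (ae_restrict_iff' measurableSet_Ioc).2 (Eventually.of_forall fun x hx => ?_)
    have h1 : 0 < 1 + x := by linarith [hx.1]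
    have h2 : 0 ≤ Real.log (1 + x) := Real.log_nonneg (by linarith [hx.1])
    simp only [Pi.zero_apply]
    positivity

lemma lint_tail (M : ℝ) (hM : 0 < M) :
    ∫⁻ x in Ioi M, ENNReal.ofReal (M / x ^ 2) = 1 := by
  have h1 := integral_Ioi_rpow_of_lt (show (-2 : ℝ) < -1 by norm_num) hM
  have h2 := integrableOn_Ioi_rpow_of_lt (show (-2 : ℝ) < -1 by norm_num) hM
  have h3 : ∫⁻ x in Ioi M, ENNReal.ofReal (M / x ^ 2)
      = ∫⁻ x in Ioi M, ENNReal.ofReal (M * x ^ (-2 : ℝ)) := by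
    refine setLIntegral_congr_fun measurableSet_Ioi fun x hx => ?_
    have : 0 < x := hM.trans hx
    rw [Real.rpow_neg this.le, div_eq_mul_inv]
    norm_cast
  rw [h3, ← ofReal_integral_eq_lintegral_ofReal (h2.const_mul M), integral_const_mul, h1]
  · rw [show (-2 : ℝ) + 1 = -1 by norm_num, Real.rpow_neg_one]
    rw [show M * (-M⁻¹ / -1) = 1 by field_simp, ENNReal.ofReal_one]
  · refine (ae_restrict_iff' measurableSet_Ioi).2 (Eventually.of_forall fun x hx => ?_)
    have : 0 < x := hM.trans hx
    simp only [Pi.zero_apply]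
    positivity

lemma lint_half (L : ℝ) (hL : 1 ≤ L) :
    ∫⁻ x in Ioi 0, ENNReal.ofReal (Wt L x * ((1 + |x|) * (1 + Real.log (1 + |x|)))⁻¹)
      ≤ ENNReal.ofReal (1 + Real.log (1 + Real.log (1 + 3 * L))) := by
  have hM : 0 < 3 * L := by linarith
  rw [← Ioc_union_Ioi_eq_Ioi hM.le, add_comm (1 : ℝ), ENNReal.ofReal_add ?_ zero_le_one,
    ENNReal.ofReal_one, ← lint_loglog _ hM.le, ← lint_tail _ hM]
  · refine (lintegral_union_le _ _ _).trans (add_le_add ?_ ?_)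
    · refine setLIntegral_mono' measurableSet_Ioc fun x hx => ?_
      rw [abs_of_pos hx.1]
      unfold Wt
      rw [if_pos (by rw [abs_of_pos hx.1]; exact hx.2), one_mul]
    · refine setLIntegral_mono' measurableSet_Ioi fun x hx => ?_
      have hx' : 3 * L < x := hx
      have h0 : 0 < x := hM.trans hx
      unfold Wt
      rw [abs_of_pos h0, if_neg (not_le.2 hx)]
      refine ENNReal.ofReal_le_ofReal ?_
      have : 0 ≤ Real.log (1 + x) := Real.log_nonneg (by linarith)
      rw [pow_two, ← div_div, div_eq_mul_inv (3 * L / x)]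
      gcongr
      nlinarith
  · refine Real.log_nonneg ?_
    linarith [Real.log_nonneg (show 1 ≤ 1 + 3 * L by linarith)]

lemma lint_full (L : ℝ) (hL : 1 ≤ L) :
    ∫⁻ x, ENNReal.ofReal (Wt L x * ((1 + |x|) * (1 + Real.log (1 + |x|)))⁻¹)
      ≤ ENNReal.ofReal (2 * (1 + Real.log (1 + Real.log (1 + 3 * L)))) := by
  set F : ℝ → ℝ≥0∞ := fun x => ENNReal.ofReal (Wt L x * ((1 + |x|) * (1 + Real.log (1 + |x|)))⁻¹)
    with hF
  have hev : ∀ x, F (-x) = F x := by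
    intro x; simp only [hF, Wt, abs_neg]
  have hneg : ∫⁻ x in Iio 0, F x = ∫⁻ x in Ioi 0, F x := by
    rw [← lintegral_indicator measurableSet_Iio, ← lintegral_indicator measurableSet_Ioi,
      ← lintegral_neg_eq_self]
    refine lintegral_congr fun x => ?_
    by_cases hx : 0 < x
    · rw [indicator_of_mem (show -x ∈ Iio 0 by simpa using hx), indicator_of_mem (show x ∈ Ioi 0 from hx),
        hev]
    · rw [indicator_of_notMem (show -x ∉ Iio 0 by simpa using hx),
        indicator_of_notMem (show x ∉ Ioi 0 from hx)]
  have : ∫⁻ x, F x = (∫⁻ x in Iio 0, F x) + ∫⁻ x in Ioi 0, F x := by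
    rw [← lintegral_add_compl F (measurableSet_Iio (a := (0 : ℝ))), compl_Iio,
      setLIntegral_congr Ioi_ae_eq_Ici]
  rw [this, hneg, ← two_mul, ENNReal.ofReal_mul (by norm_num), ENNReal.ofReal_ofNat]
  gcongr
  exact lint_half L hL

lemma measurable_kern : Measurable (fun p : ℝ × ℝ × ℝ => kern p.1 p.2.1 p.2.2) := by
  unfold kern
  have : Measurable (fun p : ℝ × ℝ × ℝ => Real.log (1 + |p.1|)) :=
    Real.measurable_log.comp (by fun_prop)
  fun_prop

lemma lint_Psi_inner (L z : ℝ) (hL : 1 ≤ L) :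
    ∫⁻ s, ∫⁻ z2, ENNReal.ofReal (kern z z2 s * Wt L z)
      ≤ ENNReal.ofReal (2 * π ^ 2) *
        ENNReal.ofReal (Wt L z * ((1 + |z|) * (1 + Real.log (1 + |z|)))⁻¹) := by
  have hl := log_one_add_abs_nonneg z
  have hW := (Wt_pos (L := L) (z := z) (by linarith)).le
  set B := 1 + Real.log (1 + |z|) with hB
  have hBp : 0 < B := by linarith
  set A := √(1 + z ^ 2) with hA
  have hAp : 0 < A := Real.sqrt_pos.2 (by positivity)
  have hA2 : A ^ 2 = 1 + z ^ 2 := Real.sq_sqrt (by positivity)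
  have e : ∀ s z2 : ℝ, ENNReal.ofReal (kern z z2 s * Wt L z)
      = ENNReal.ofReal (Wt L z) * ENNReal.ofReal ((B ^ 2 + s ^ 2)⁻¹) *
        ENNReal.ofReal ((A ^ 2 + z2 ^ 2)⁻¹) := by
    intro s z2
    rw [← ENNReal.ofReal_mul hW, ← ENNReal.ofReal_mul (by positivity), hA2]
    congr 1
    unfold kern
    ring
  simp_rw [e]
  have e2 : ∀ s : ℝ, ∫⁻ z2 : ℝ, ENNReal.ofReal (Wt L z) * ENNReal.ofReal ((B ^ 2 + s ^ 2)⁻¹) *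
        ENNReal.ofReal ((A ^ 2 + z2 ^ 2)⁻¹)
      = ENNReal.ofReal (Wt L z) * ENNReal.ofReal (π / A) * ENNReal.ofReal ((B ^ 2 + s ^ 2)⁻¹) := by
    intro s
    rw [lintegral_const_mul _ (by fun_prop), lint_cauchy A hAp]
    ring
  simp_rw [e2]
  rw [lintegral_const_mul _ (by fun_prop), lint_cauchy B hBp, ← ENNReal.ofReal_mul hW,
    ← ENNReal.ofReal_mul (by positivity), ← ENNReal.ofReal_mul (by positivity)]
  refine ENNReal.ofReal_le_ofReal ?_
  have h1 : (1 + |z|) / 2 ≤ A := by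
    refine Real.le_sqrt_of_sq_le ?_
    nlinarith [sq_abs z, sq_nonneg (|z| - 1)]
  have h2 : π / A ≤ π / ((1 + |z|) / 2) := by gcongr
  calc Wt L z * (π / A) * (π / B) ≤ Wt L z * (π / ((1 + |z|) / 2)) * (π / B) := by gcongr
    _ = _ := by field_simp

lemma lint_Psi (L : ℝ) (hL : 1 ≤ L) :
    ∫⁻ y, ENNReal.ofReal (Psi L y) ∂ρG
      ≤ ENNReal.ofReal (c0 * 18000000 * (2 * π ^ 2) *
          (2 * (1 + Real.log (1 + Real.log (1 + 3 * L))))) := by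
  have hc := c0_pos
  rw [lintegral_rho _ (measurable_Psi L).ennreal_ofReal]
  have hkm : Measurable (fun p : ℝ × ℝ × ℝ => ENNReal.ofReal (kern p.1 p.2.1 p.2.2 * Wt L p.1)) :=
    (measurable_kern.mul ((measurable_Wt L).comp measurable_fst)).ennreal_ofReal
  have h1 : ∀ s : ℝ, ∫⁻ x2, ∫⁻ x1, ENNReal.ofReal (Psi L (x1, x2, Real.exp s))
      = ENNReal.ofReal (c0 * 18000000) * ∫⁻ z2, ∫⁻ z1, ENNReal.ofReal (kern z1 z2 s * Wt L z1) := by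
    intro s
    set m := mm (Real.exp s) with hm
    have hmp : 0 < m := mm_pos _
    have e : ∀ x2 x1 : ℝ, ENNReal.ofReal (Psi L (x1, x2, Real.exp s))
        = ENNReal.ofReal (c0 * 18000000) * (ENNReal.ofReal m⁻¹ * (ENNReal.ofReal m⁻¹ *
          ENNReal.ofReal (kern (x1 / m) (x2 / m) s * Wt L (x1 / m)))) := by
      intro x2 x1
      rw [← ENNReal.ofReal_mul (by positivity), ← ENNReal.ofReal_mul (by positivity),
        ← ENNReal.ofReal_mul (by positivity)]
      congr 1
      unfold Psi Phi0
      simp only [Real.log_exp, ← hm]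
      rw [← inv_pow]
      ring
    simp_rw [e]
    have e2 : ∀ x2 : ℝ, ∫⁻ x1 : ℝ, ENNReal.ofReal (c0 * 18000000) * (ENNReal.ofReal m⁻¹ * (ENNReal.ofReal m⁻¹ *
          ENNReal.ofReal (kern (x1 / m) (x2 / m) s * Wt L (x1 / m))))
        = ENNReal.ofReal (c0 * 18000000) * (ENNReal.ofReal m⁻¹ *
          ∫⁻ z1 : ℝ, ENNReal.ofReal (kern z1 (x2 / m) s * Wt L z1)) := by
      intro x2
      have hk : Measurable fun z1 : ℝ => ENNReal.ofReal (kern z1 (x2 / m) s * Wt L z1) :=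
        hkm.comp (f := fun z1 : ℝ => (z1, x2 / m, s)) (by fun_prop)
      have hk' : Measurable fun x1 : ℝ => ENNReal.ofReal (kern (x1 / m) (x2 / m) s * Wt L (x1 / m)) :=
        hk.comp (by fun_prop : Measurable fun x : ℝ => x / m)
      rw [lintegral_const_mul _ ((hk'.const_mul _).const_mul _), lintegral_const_mul _ (hk'.const_mul _),
        lintegral_const_mul _ hk', ← lint_scale _ hk m hmp]
    simp_rw [e2]
    have hk : Measurable fun z2 : ℝ => ∫⁻ z1 : ℝ, ENNReal.ofReal (kern z1 z2 s * Wt L z1) := by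
      refine Measurable.lintegral_prod_right' (f := fun p : ℝ × ℝ => ENNReal.ofReal (kern p.2 p.1 s * Wt L p.2)) ?_
      exact hkm.comp (f := fun p : ℝ × ℝ => (p.2, p.1, s)) (by fun_prop)
    have hk' : Measurable fun x2 : ℝ => ∫⁻ z1 : ℝ, ENNReal.ofReal (kern z1 (x2 / m) s * Wt L z1) :=
      hk.comp (by fun_prop : Measurable fun x : ℝ => x / m)
    rw [lintegral_const_mul _ (hk'.const_mul _), lintegral_const_mul _ hk', ← lint_scale _ hk m hmp]
  simp_rw [h1]
  have h2 : ∀ s : ℝ, ∫⁻ z2 : ℝ, ∫⁻ z1 : ℝ, ENNReal.ofReal (kern z1 z2 s * Wt L z1)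
      = ∫⁻ z1 : ℝ, ∫⁻ z2 : ℝ, ENNReal.ofReal (kern z1 z2 s * Wt L z1) := by
    intro s
    refine lintegral_lintegral_swap (f := fun z2 z1 : ℝ => ENNReal.ofReal (kern z1 z2 s * Wt L z1)) ?_
    exact (hkm.comp (f := fun p : ℝ × ℝ => (p.2, p.1, s)) (by fun_prop)).aemeasurable
  simp_rw [h2]
  have hk3 : Measurable fun p : ℝ × ℝ => ∫⁻ z2 : ℝ, ENNReal.ofReal (kern p.2 z2 p.1 * Wt L p.2) := by
    refine Measurable.lintegral_prod_right'
      (f := fun q : (ℝ × ℝ) × ℝ => ENNReal.ofReal (kern q.1.2 q.2 q.1.1 * Wt L q.1.2)) ?_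
    exact hkm.comp (f := fun q : (ℝ × ℝ) × ℝ => (q.1.2, q.2, q.1.1)) (by fun_prop)
  rw [lintegral_const_mul _ hk3.lintegral_prod_right',
    lintegral_lintegral_swap hk3.aemeasurable, mul_assoc (c0 * 18000000),
    ENNReal.ofReal_mul (p := c0 * 18000000) (by positivity)]
  gcongr
  calc _ ≤ ∫⁻ z, ENNReal.ofReal (2 * π ^ 2) *
        ENNReal.ofReal (Wt L z * ((1 + |z|) * (1 + Real.log (1 + |z|)))⁻¹) :=
        lintegral_mono fun z => lint_Psi_inner L z hL
    _ ≤ _ := by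
      rw [lintegral_const_mul, ENNReal.ofReal_mul (p := 2 * π ^ 2) (by positivity)]
      · gcongr
        exact lint_full L hL
      · have := measurable_Wt L
        have h : Measurable (fun z : ℝ => Real.log (1 + |z|)) := Real.measurable_log.comp (by fun_prop)
        fun_prop


/-! ### The local part of the heat kernel -/

def Lc (t : ℝ) (y : G) : ℝ := if 2 ≤ coshArg y then 0 else heatK t y

lemma measurable_Lc (t : ℝ) : Measurable (Lc t) := by
  unfold Lc
  exact Measurable.ite (measurableSet_le measurable_const measurable_coshArg) measurable_const
    (measurable_heatK t)

lemma heatK_split (t : ℝ) (y : G) : heatK t y = Lc t y + Pt t y := by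
  unfold Lc Pt; split_ifs <;> simp

lemma Lc_nonneg {t : ℝ} (ht : 0 < t) (y : G) (hy : 0 < y.2.2) : 0 ≤ Lc t y := by
  unfold Lc; split_ifs
  · exact le_rfl
  · exact heatK_nonneg ht y hy

lemma cosh_lower (s : ℝ) : 1 + s ^ 2 / 2 ≤ Real.cosh s := by
  have h1 : |s| / 2 ≤ Real.sinh (|s| / 2) := Real.self_le_sinh_iff.2 (by positivity)
  have h2 : Real.cosh s = 1 + 2 * Real.sinh (|s| / 2) ^ 2 := by
    rw [← Real.cosh_abs s]
    have := Real.cosh_two_mul (|s| / 2)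
    rw [Real.cosh_sq] at this
    rw [show |s| = 2 * (|s| / 2) by ring, this]
    rw [show 2 * (|s| / 2) / 2 = |s| / 2 by ring]; ring
  rw [h2]
  have h3 : (|s| / 2) ^ 2 ≤ Real.sinh (|s| / 2) ^ 2 := by gcongr
  have := sq_abs s
  nlinarith

lemma loc_supp (y : G) (hy : 0 < y.2.2) (hu : coshArg y < 2) :
    1 / 4 ≤ y.2.2 ∧ y.2.2 ≤ 4 ∧ |y.1| ≤ 4 ∧ |y.2.1| ≤ 4 := by
  rw [coshArg_eq y hy, div_lt_iff₀ (by positivity)] at hu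
  have h1 := sq_nonneg y.1
  have h2 := sq_nonneg y.2.1
  have h4 : y.2.2 ≤ 4 := by nlinarith
  refine ⟨by nlinarith, h4, ?_, ?_⟩
  · exact abs_le_of_sq_le_sq (by nlinarith) (by norm_num)
  · exact abs_le_of_sq_le_sq (by nlinarith) (by norm_num)

lemma Lc_le {t : ℝ} (ht : 0 < t) (y : G) (hy : 0 < y.2.2) :
    Lc t y ≤ 4 * c0 * (√t ^ 3)⁻¹ * (Real.exp (-(32 * t)⁻¹ * Real.log y.2.2 ^ 2) *
      (Real.exp (-(32 * t)⁻¹ * y.2.1 ^ 2) * Real.exp (-(32 * t)⁻¹ * y.1 ^ 2))) := by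
  have hc := c0_pos
  have hst : 0 < √t := Real.sqrt_pos.2 ht
  unfold Lc
  split_ifs with hu
  · positivity
  push Not at hu
  obtain ⟨h1, h2, -, -⟩ := loc_supp y hy hu
  have hu1 := one_le_coshArg y hy
  have hr := rr_sq_ge hu1 hu.le
  have hs : Real.log y.2.2 ^ 2 / 2 + (y.1 ^ 2 + y.2.1 ^ 2) / 8 ≤ rr (coshArg y) ^ 2 := by
    refine le_trans ?_ hr
    have hcl := cosh_lower (Real.log y.2.2)
    rw [Real.cosh_log hy] at hcl
    have h5 : (y.1 ^ 2 + y.2.1 ^ 2) / 4 ≤ y.2.2⁻¹ * (y.1 ^ 2 + y.2.1 ^ 2) := by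
      rw [div_eq_inv_mul]; gcongr
    unfold coshArg
    linarith
  rw [heatK_eq t y hy, ← Real.exp_add, ← Real.exp_add]
  have h6 : y.2.2⁻¹ ≤ 4 := by
    rw [inv_le_comm₀ hy (by norm_num)]; linarith
  calc c0 * (y.2.2⁻¹ * Hh t (coshArg y))
      ≤ c0 * (4 * (t ^ (-(3 : ℝ)/2) * Real.exp (-(rr (coshArg y) ^ 2) / (4 * t)))) := by
        gcongr
        · exact Hh_nonneg ht hu1
        · exact Hh_le ht hu1
    _ = 4 * c0 * (√t ^ 3)⁻¹ * Real.exp (-(rr (coshArg y) ^ 2) / (4 * t)) := by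
        rw [tpow ht]; ring
    _ ≤ _ := by
        gcongr
        rw [div_le_iff₀ (by positivity)]
        have : (-(32 * t)⁻¹ * Real.log y.2.2 ^ 2 + (-(32 * t)⁻¹ * y.2.1 ^ 2 + -(32 * t)⁻¹ * y.1 ^ 2)) * (4 * t)
          = -(Real.log y.2.2 ^ 2 + y.2.1 ^ 2 + y.1 ^ 2) / 8 := by
          field_simp; ring
        rw [this]
        nlinarith [sq_nonneg (Real.log y.2.2)]

lemma lint_gauss (b : ℝ) (hb : 0 < b) :
    ∫⁻ x : ℝ, ENNReal.ofReal (Real.exp (-b * x ^ 2)) = ENNReal.ofReal (√(π / b)) := by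
  rw [← integral_gaussian, ofReal_integral_eq_lintegral_ofReal (integrable_exp_neg_mul_sq hb)]
  exact Eventually.of_forall fun x => by positivity

def C0 : ℝ := 4 * c0 * √(32 * π) ^ 3

lemma lint_Lc {t : ℝ} (ht : 0 < t) : ∫⁻ y, ENNReal.ofReal (Lc t y) ∂ρG ≤ ENNReal.ofReal C0 := by
  have hc := c0_pos
  have hst : 0 < √t := Real.sqrt_pos.2 ht
  set b := (32 * t)⁻¹ with hb
  have hbp : 0 < b := by positivity
  refine (lintegral_rho_le (H := fun y => ENNReal.ofReal (4 * c0 * (√t ^ 3)⁻¹) *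
    (ENNReal.ofReal (Real.exp (-b * Real.log y.2.2 ^ 2)) *
      (ENNReal.ofReal (Real.exp (-b * y.2.1 ^ 2)) * ENNReal.ofReal (Real.exp (-b * y.1 ^ 2))))) ?_).trans ?_
  · intro y hy
    rw [← ENNReal.ofReal_mul (by positivity), ← ENNReal.ofReal_mul (by positivity),
      ← ENNReal.ofReal_mul (by positivity)]
    exact ENNReal.ofReal_le_ofReal (Lc_le ht y hy)
  · have hlog : Measurable fun y : G => Real.log y.2.2 := Real.measurable_log.comp (by fun_prop)
    rw [lintegral_rho _ (by fun_prop)]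
    simp only [Real.log_exp]
    have e1 : ∀ s x2 : ℝ, ∫⁻ x1 : ℝ, ENNReal.ofReal (4 * c0 * (√t ^ 3)⁻¹) *
      (ENNReal.ofReal (Real.exp (-b * s ^ 2)) *
      (ENNReal.ofReal (Real.exp (-b * x2 ^ 2)) * ENNReal.ofReal (Real.exp (-b * x1 ^ 2))))
      = ENNReal.ofReal (4 * c0 * (√t ^ 3)⁻¹) * (ENNReal.ofReal (Real.exp (-b * s ^ 2)) *
      (ENNReal.ofReal (√(π / b)) * ENNReal.ofReal (Real.exp (-b * x2 ^ 2)))) := by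
      intro s x2
      rw [lintegral_const_mul _ (by fun_prop), lintegral_const_mul _ (by fun_prop),
        lintegral_const_mul _ (by fun_prop), lint_gauss b hbp]
      ring
    simp_rw [e1]
    have e2 : ∀ s : ℝ, ∫⁻ x2 : ℝ, ENNReal.ofReal (4 * c0 * (√t ^ 3)⁻¹) * (ENNReal.ofReal (Real.exp (-b * s ^ 2)) *
      (ENNReal.ofReal (√(π / b)) * ENNReal.ofReal (Real.exp (-b * x2 ^ 2))))
      = ENNReal.ofReal (4 * c0 * (√t ^ 3)⁻¹) * (ENNReal.ofReal (√(π / b)) * (ENNReal.ofReal (√(π / b)) *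
        ENNReal.ofReal (Real.exp (-b * s ^ 2)))) := by
      intro s
      rw [lintegral_const_mul _ (by fun_prop), lintegral_const_mul _ (by fun_prop),
        lintegral_const_mul _ (by fun_prop), lint_gauss b hbp]
      ring
    simp_rw [e2]
    rw [lintegral_const_mul _ (by fun_prop), lintegral_const_mul _ (by fun_prop),
        lintegral_const_mul _ (by fun_prop), lint_gauss b hbp, ← ENNReal.ofReal_mul (by positivity),
        ← ENNReal.ofReal_mul (by positivity), ← ENNReal.ofReal_mul (by positivity)]
    refine le_of_eq ?_
    congr 1
    have : √(π / b) = √(32 * π) * √t := by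
      rw [← Real.sqrt_mul (by positivity), hb]; congr 1; field_simp
    rw [this]; unfold C0
    field_simp

/-! ### The building blocks -/

def BL (L : ℝ) : Set G := Icc L (L + 1) ×ˢ (Icc 0 1 ×ˢ Icc 1 2)

def SL (L : ℝ) : Set G := Icc (L - 8) (L + 9) ×ˢ (Icc (-8) 9 ×ˢ Icc (1 / 4) 8)

def chi (L : ℝ) : G → ℝ := (BL L).indicator fun _ => 1

lemma measurableSet_BL (L : ℝ) : MeasurableSet (BL L) :=
  measurableSet_Icc.prod (measurableSet_Icc.prod measurableSet_Icc)

lemma measurableSet_SL (L : ℝ) : MeasurableSet (SL L) :=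
  measurableSet_Icc.prod (measurableSet_Icc.prod measurableSet_Icc)

lemma measurable_chi (L : ℝ) : Measurable (chi L) := measurable_const.indicator (measurableSet_BL L)

lemma chi_nonneg (L : ℝ) (z : G) : 0 ≤ chi L z := indicator_nonneg (fun _ _ => zero_le_one) z

lemma chi_mem {L : ℝ} {z : G} (h : z ∈ BL L) : chi L z = 1 := indicator_of_mem h _

lemma chi_notMem {L : ℝ} {z : G} (h : z ∉ BL L) : chi L z = 0 := indicator_of_notMem h _

lemma measurable_chi_w (L : ℝ) (x : G) : Measurable fun y => chi L (gMul x (gInv y)) :=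
  (measurable_chi L).comp (measurable_gMulInv.comp (measurable_const.prodMk measurable_id))

/-- coordinates on the support -/
lemma w_mem {L : ℝ} {x y : G} (hy : 0 < y.2.2) (h : gMul x (gInv y) ∈ BL L) :
    ∃ z1 z2 z3 : ℝ, L ≤ z1 ∧ z1 ≤ L + 1 ∧ 0 ≤ z2 ∧ z2 ≤ 1 ∧ 1 ≤ z3 ∧ z3 ≤ 2 ∧
      x.1 = z1 + z3 * y.1 ∧ x.2.1 = z2 + z3 * y.2.1 ∧ x.2.2 = z3 * y.2.2 := by
  obtain ⟨⟨h1, h2⟩, ⟨h3, h4⟩, ⟨h5, h6⟩⟩ := h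
  refine ⟨_, _, _, h1, h2, h3, h4, h5, h6, ?_, ?_, ?_⟩ <;> simp only [gMul, gInv] <;>
    field_simp <;> ring

lemma lint_chi_Lc {t : ℝ} (ht : 0 < t) (L : ℝ) (x : G) :
    ∫⁻ y, ENNReal.ofReal (chi L (gMul x (gInv y)) * Lc t y) ∂ρG
      ≤ (SL L).indicator (fun _ => ENNReal.ofReal C0) x := by
  by_cases hx : x ∈ SL L
  · rw [indicator_of_mem hx]
    refine (lintegral_rho_le fun y hy => ?_).trans (lint_Lc ht)
    refine ENNReal.ofReal_le_ofReal ?_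
    have := Lc_nonneg ht y hy
    by_cases hw : gMul x (gInv y) ∈ BL L
    · rw [chi_mem hw, one_mul]
    · rw [chi_notMem hw, zero_mul]; exact this
  · rw [indicator_of_notMem hx]
    refine (lintegral_rho_le (H := fun _ => 0) fun y hy => ?_).trans (by simp)
    by_cases hw : gMul x (gInv y) ∈ BL L
    · by_cases hu : 2 ≤ coshArg y
      · simp [Lc, if_pos hu]
      · exfalso
        push Not at hu
        obtain ⟨z1, z2, z3, h1, h2, h3, h4, h5, h6, e1, e2, e3⟩ := w_mem hy hw
        obtain ⟨k1, k2, k3, k4⟩ := loc_supp y hy hu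
        rw [abs_le] at k3 k4
        refine hx ⟨⟨?_, ?_⟩, ⟨?_, ?_⟩, ⟨?_, ?_⟩⟩
        · show L - 8 ≤ x.1
          rw [e1]; nlinarith [k3.1]
        · show x.1 ≤ L + 9
          rw [e1]; nlinarith [k3.2]
        · show -8 ≤ x.2.1
          rw [e2]; nlinarith [k4.1]
        · show x.2.1 ≤ 9
          rw [e2]; nlinarith [k4.2]
        · show 1 / 4 ≤ x.2.2
          rw [e3]; nlinarith
        · show x.2.2 ≤ 8
          rw [e3]; nlinarith
    · simp [chi_notMem hw]

lemma chi_shear (L : ℝ) (x y : G) (hx : 0 < x.2.2) (hy : 0 < y.2.2) :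
    chi L (gMul x (gInv (shear (L / x.2.2) y))) = chi 0 (gMul x (gInv y)) := by
  have e : gMul x (gInv (shear (L / x.2.2) y))
      = ((gMul x (gInv y)).1 + L, (gMul x (gInv y)).2) := by
    simp only [gMul, gInv, shear]
    congr 1
    field_simp
    ring
  rw [e]
  unfold chi
  have : (((gMul x (gInv y)).1 + L, (gMul x (gInv y)).2) ∈ BL L) ↔ gMul x (gInv y) ∈ BL 0 := by
    simp only [BL, mem_prod, mem_Icc]
    constructor <;> rintro ⟨⟨h1, h2⟩, h3⟩ <;> exact ⟨⟨by linarith, by linarith⟩, h3⟩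
  by_cases h : gMul x (gInv y) ∈ BL 0
  · rw [indicator_of_mem h, indicator_of_mem (this.2 h)]
  · rw [indicator_of_notMem h, indicator_of_notMem (fun h' => h (this.1 h'))]

lemma shear_pos {k : ℝ} {y : G} (hy : 0 < y.2.2) : 0 < (shear k y).2.2 := hy

/-- change of variables -/
lemma lint_chi_shear (L : ℝ) (x : G) (hx : 0 < x.2.2) (F : G → ℝ≥0∞) (hF : Measurable F) :
    ∫⁻ y, ENNReal.ofReal (chi L (gMul x (gInv y))) * F y ∂ρG
      = ∫⁻ y, ENNReal.ofReal (chi 0 (gMul x (gInv y))) * F (shear (L / x.2.2) y) ∂ρG := by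
  have hm : Measurable fun y => ENNReal.ofReal (chi L (gMul x (gInv y))) * F y :=
    (measurable_chi_w L x).ennreal_ofReal.mul hF
  rw [← lintegral_shear (L / x.2.2) _ hm]
  refine lintegral_congr_ae (ae_pos.mono fun y hy => ?_)
  simp only [chi_shear L x y hx hy]

def K0 (t : ℝ) (x : G) : ℝ≥0∞ :=
  ENNReal.ofReal (c0 * (2 / x.2.2) * t ^ (-(3 : ℝ)/2)) *
    ∫⁻ y, ENNReal.ofReal (chi 0 (gMul x (gInv y))) ∂ρG

lemma K0_lt_top (t : ℝ) (x : G) (hx : 0 < x.2.2) : K0 t x < ⊤ := by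
  refine ENNReal.mul_lt_top ENNReal.ofReal_lt_top ?_
  set Q : Set G := Icc (-(|x.1| + 1)) (|x.1| + 1) ×ˢ (Icc (-(|x.2.1| + 1)) (|x.2.1| + 1) ×ˢ
    Icc (x.2.2 / 2) x.2.2) with hQ
  have hQm : MeasurableSet Q := measurableSet_Icc.prod (measurableSet_Icc.prod measurableSet_Icc)
  refine (lintegral_rho_le (H := Q.indicator 1) fun y hy => ?_).trans_lt ?_
  · by_cases hw : gMul x (gInv y) ∈ BL 0
    · obtain ⟨z1, z2, z3, h1, h2, h3, h4, h5, h6, e1, e2, e3⟩ := w_mem hy hw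
      have aux : ∀ p z q : ℝ, 0 ≤ z → z ≤ 1 → p = z + z3 * q → q ∈ Icc (-(|p| + 1)) (|p| + 1) := by
        intro p z q hz0 hz1 e
        rw [mem_Icc, ← abs_le]
        have k1 : |z3 * q| = z3 * |q| := by rw [abs_mul, abs_of_pos (by linarith)]
        have k2 : |z3 * q| ≤ |p| + |z| := by
          rw [show z3 * q = p - z by linarith]; exact abs_sub p z
        rw [abs_of_nonneg hz0] at k2
        nlinarith [abs_nonneg q]
      rw [indicator_of_mem]
      · simp [chi_mem hw]
      · refine ⟨aux _ _ _ h1 (by linarith) e1, aux _ _ _ h3 h4 e2, ⟨?_, ?_⟩⟩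
        · show x.2.2 / 2 ≤ y.2.2
          nlinarith
        · show y.2.2 ≤ x.2.2
          nlinarith
    · simp [chi_notMem hw]
  · rw [lintegral_indicator_one hQm, hQ, rho_box _ _ _ _ _ _ (by positivity) (by linarith)]
    exact ENNReal.mul_lt_top ENNReal.ofReal_lt_top
      (ENNReal.mul_lt_top ENNReal.ofReal_lt_top ENNReal.ofReal_lt_top)

lemma lint_chi_heatK {t : ℝ} (ht : 0 < t) (L : ℝ) (x : G) (hx : 0 < x.2.2) :
    ∫⁻ y, ENNReal.ofReal (chi L (gMul x (gInv y)) * heatK t y) ∂ρG ≤ K0 t x := by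
  have hc := c0_pos
  have h0 : ∫⁻ y, ENNReal.ofReal (chi 0 (gMul x (gInv y))) ∂ρG
      = ∫⁻ y, ENNReal.ofReal (chi L (gMul x (gInv y))) ∂ρG := by
    have := lint_chi_shear L x hx (fun _ => 1) measurable_const
    simpa using this.symm
  unfold K0
  rw [h0, ← lintegral_const_mul _ (measurable_chi_w L x).ennreal_ofReal]
  refine lintegral_rho_le fun y hy => ?_
  rw [← ENNReal.ofReal_mul (by positivity)]
  refine ENNReal.ofReal_le_ofReal ?_
  by_cases hw : gMul x (gInv y) ∈ BL L
  · obtain ⟨z1, z2, z3, h1, h2, h3, h4, h5, h6, e1, e2, e3⟩ := w_mem hy hw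
    rw [chi_mem hw, one_mul, mul_one, heatK_eq t y hy]
    have hu := one_le_coshArg y hy
    have h7 : y.2.2⁻¹ ≤ 2 / x.2.2 := by
      rw [inv_eq_one_div, div_le_div_iff₀ hy hx]; nlinarith
    have h8 : Hh t (coshArg y) ≤ t ^ (-(3 : ℝ)/2) := by
      refine (Hh_le ht hu).trans (mul_le_of_le_one_right (by positivity) ?_)
      rw [Real.exp_le_one_iff, div_nonpos_iff]
      right
      exact ⟨by nlinarith [sq_nonneg (rr (coshArg y))], by positivity⟩
    rw [mul_assoc]
    have := Hh_nonneg ht hu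
    gcongr
  · simp [chi_notMem hw]

lemma integrable_chi_heatK {t : ℝ} (ht : 0 < t) (L : ℝ) (x : G) (hx : 0 < x.2.2) :
    Integrable (fun y => chi L (gMul x (gInv y)) * heatK t y) ρG := by
  refine ⟨((measurable_chi_w L x).mul (measurable_heatK t)).aestronglyMeasurable, ?_⟩
  rw [hasFiniteIntegral_iff_ofReal]
  · exact (lint_chi_heatK ht L x hx).trans_lt (K0_lt_top t x hx)
  · exact ae_pos.mono fun y hy => mul_nonneg (chi_nonneg _ _) (heatK_nonneg ht y hy)

lemma integrable_chi_Lc {t : ℝ} (ht : 0 < t) (L : ℝ) (x : G) (hx : 0 < x.2.2) :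
    Integrable (fun y => chi L (gMul x (gInv y)) * Lc t y) ρG := by
  refine (integrable_chi_heatK ht L x hx).mono'
    ((measurable_chi_w L x).mul (measurable_Lc t)).aestronglyMeasurable (ae_pos.mono fun y hy => ?_)
  rw [Real.norm_of_nonneg (mul_nonneg (chi_nonneg _ _) (Lc_nonneg ht y hy)), heatK_split]
  have := chi_nonneg L (gMul x (gInv y))
  gcongr
  linarith [Pt_nonneg ht y hy]

lemma integrable_chi_Pt {t : ℝ} (ht : 0 < t) (L : ℝ) (x : G) (hx : 0 < x.2.2) :
    Integrable (fun y => chi L (gMul x (gInv y)) * Pt t y) ρG := by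
  refine (integrable_chi_heatK ht L x hx).mono'
    ((measurable_chi_w L x).mul (measurable_Pt t)).aestronglyMeasurable (ae_pos.mono fun y hy => ?_)
  rw [Real.norm_of_nonneg (mul_nonneg (chi_nonneg _ _) (Pt_nonneg ht y hy)), heatK_split]
  have := chi_nonneg L (gMul x (gInv y))
  gcongr
  linarith [Lc_nonneg ht y hy]

def fl (L : ℝ) (z : G) : ℝ := chi L z - chi 0 z

def ML (L : ℝ) (x : G) : ℝ≥0∞ :=
  (SL L).indicator (fun _ => ENNReal.ofReal C0) x + (SL 0).indicator (fun _ => ENNReal.ofReal C0) x +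
  (∫⁻ y, ENNReal.ofReal (chi L (gMul x (gInv y))) * ENNReal.ofReal (Psi L y) ∂ρG +
   ∫⁻ y, ENNReal.ofReal (chi 0 (gMul x (gInv y))) * ENNReal.ofReal (Psi L y) ∂ρG)

lemma far_bound {t L : ℝ} (ht : 0 < t) (hL : 2 ≤ L) (x : G) (hx : 0 < x.2.2) :
    ‖(∫ y, chi L (gMul x (gInv y)) * Pt t y ∂ρG) - ∫ y, chi 0 (gMul x (gInv y)) * Pt t y ∂ρG‖ₑ
      ≤ ∫⁻ y, ENNReal.ofReal (chi L (gMul x (gInv y))) * ENNReal.ofReal (Psi L y) ∂ρG +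
        ∫⁻ y, ENNReal.ofReal (chi 0 (gMul x (gInv y))) * ENNReal.ofReal (Psi L y) ∂ρG := by
  have hi := integrable_chi_Pt ht L x hx
  have hmp := mp_shear (L / x.2.2)
  have h1 : ∫ y, chi L (gMul x (gInv y)) * Pt t y ∂ρG
      = ∫ y, chi 0 (gMul x (gInv y)) * Pt t (shear (L / x.2.2) y) ∂ρG := by
    have := integral_map (μ := ρG) (φ := shear (L / x.2.2)) (measurable_shear _).aemeasurable
      (f := fun y => chi L (gMul x (gInv y)) * Pt t y) (by rw [hmp.map_eq]; exact hi.1)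
    rw [hmp.map_eq] at this
    rw [this]
    refine integral_congr_ae (ae_pos.mono fun y hy => ?_)
    simp only [chi_shear L x y hx hy]
  have h2 : Integrable (fun y => chi 0 (gMul x (gInv y)) * Pt t (shear (L / x.2.2) y)) ρG := by
    have := hmp.integrable_comp_of_integrable hi
    refine this.congr (ae_pos.mono fun y hy => ?_)
    simp only [Function.comp, chi_shear L x y hx hy]
  have hm : Measurable fun y => ENNReal.ofReal (chi 0 (gMul x (gInv y))) * ENNReal.ofReal (Psi L y) :=
    (measurable_chi_w 0 x).ennreal_ofReal.mul (measurable_Psi L).ennreal_ofReal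
  rw [h1, ← integral_sub h2 (integrable_chi_Pt ht 0 x hx),
    lint_chi_shear L x hx _ (measurable_Psi L).ennreal_ofReal,
    ← lintegral_add_right _ hm]
  refine (enorm_integral_le_lintegral_enorm _).trans (lintegral_rho_le fun y hy => ?_)
  have hL0 : 0 < L := by linarith
  rw [← mul_add, ← ENNReal.ofReal_add (Psi_nonneg hL0 _) (Psi_nonneg hL0 _), ← mul_sub,
    Real.enorm_eq_ofReal_abs, ← ENNReal.ofReal_mul (chi_nonneg _ _), abs_mul,
    abs_of_nonneg (chi_nonneg _ _)]
  refine ENNReal.ofReal_le_ofReal ?_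
  by_cases hw : gMul x (gInv y) ∈ BL 0
  · obtain ⟨z1, z2, z3, h1, h2, h3, h4, h5, h6, e1, e2, e3⟩ := w_mem hy hw
    refine mul_le_mul_of_nonneg_left ?_ (chi_nonneg _ _)
    refine Pt_diff ht hL y hy (by positivity) ?_
    rw [div_mul_eq_mul_div, div_le_iff₀ hx]
    gcongr
    nlinarith
  · simp [chi_notMem hw]

lemma conv_bound {t L : ℝ} (ht : 0 < t) (hL : 2 ≤ L) (x : G) (hx : 0 < x.2.2) :
    ‖∫ y, fl L (gMul x (gInv y)) * heatK t y ∂ρG‖ₑ ≤ ML L x := by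
  have e : ∀ y, fl L (gMul x (gInv y)) * heatK t y
      = (chi L (gMul x (gInv y)) * Lc t y - chi 0 (gMul x (gInv y)) * Lc t y)
        + (chi L (gMul x (gInv y)) * Pt t y - chi 0 (gMul x (gInv y)) * Pt t y) := by
    intro y; unfold fl; rw [heatK_split]; ring
  simp_rw [e]
  have i1 := integrable_chi_Lc ht L x hx
  have i2 := integrable_chi_Lc ht 0 x hx
  have i3 := integrable_chi_Pt ht L x hx
  have i4 := integrable_chi_Pt ht 0 x hx
  have i5 : Integrable (fun y => chi L (gMul x (gInv y)) * Lc t y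
      - chi 0 (gMul x (gInv y)) * Lc t y) ρG := i1.sub i2
  have i6 : Integrable (fun y => chi L (gMul x (gInv y)) * Pt t y
      - chi 0 (gMul x (gInv y)) * Pt t y) ρG := i3.sub i4
  rw [integral_add i5 i6, integral_sub i1 i2, integral_sub i3 i4]
  have loc : ∀ M : ℝ, ‖∫ y, chi M (gMul x (gInv y)) * Lc t y ∂ρG‖ₑ
      ≤ (SL M).indicator (fun _ => ENNReal.ofReal C0) x := by
    intro M
    refine (enorm_integral_le_lintegral_enorm _).trans (le_trans ?_ (lint_chi_Lc ht M x))
    refine lintegral_rho_le fun y hy => ?_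
    rw [Real.enorm_eq_ofReal_abs, abs_of_nonneg (mul_nonneg (chi_nonneg _ _) (Lc_nonneg ht y hy))]
  refine (enorm_add_le _ _).trans ?_
  unfold ML
  refine add_le_add ?_ (far_bound ht hL x hx)
  exact enorm_sub_le.trans (add_le_add (loc L) (loc 0))

lemma measurable_ML (L : ℝ) : Measurable (ML L) := by
  unfold ML
  refine ((measurable_const.indicator (measurableSet_SL L)).add
    (measurable_const.indicator (measurableSet_SL 0))).add ?_
  exact (measurable_conv _ _ (measurable_chi L).ennreal_ofReal (measurable_Psi L).ennreal_ofReal).add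
    (measurable_conv _ _ (measurable_chi 0).ennreal_ofReal (measurable_Psi L).ennreal_ofReal)

lemma lint_chi (L : ℝ) : ∫⁻ z, ENNReal.ofReal (chi L z) ∂ρG = ENNReal.ofReal (Real.log 2) := by
  have : ∀ z, ENNReal.ofReal (chi L z) = (BL L).indicator 1 z := by
    intro z
    by_cases h : z ∈ BL L
    · simp [chi_mem h, h]
    · simp [chi_notMem h, h]
  simp_rw [this]
  rw [lintegral_indicator_one (measurableSet_BL L)]
  unfold BL
  rw [rho_box _ _ _ _ _ _ one_pos (by norm_num)]
  simp

lemma lint_ML (L : ℝ) (hL : 2 ≤ L) : ∫⁻ x, ML L x ∂ρG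
    ≤ ENNReal.ofReal (2 * (C0 * (289 * Real.log 32)) + 2 * (Real.log 2 * (c0 * 18000000 * (2 * π ^ 2) *
          (2 * (1 + Real.log (1 + Real.log (1 + 3 * L))))))) := by
  have hc := c0_pos
  have hC0 : 0 ≤ C0 := by unfold C0; positivity
  have hl32 : 0 ≤ Real.log 32 := Real.log_nonneg (by norm_num)
  have hl2 : 0 ≤ Real.log 2 := Real.log_nonneg (by norm_num)
  have hll : 0 ≤ Real.log (1 + Real.log (1 + 3 * L)) := Real.log_nonneg (by
    linarith [Real.log_nonneg (show 1 ≤ 1 + 3 * L by linarith)])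
  have hS : ∀ M : ℝ, ∫⁻ x, (SL M).indicator (fun _ => ENNReal.ofReal C0) x ∂ρG
      = ENNReal.ofReal (C0 * (289 * Real.log 32)) := by
    intro M
    rw [lintegral_indicator_const (measurableSet_SL M)]
    unfold SL
    rw [rho_box _ _ _ _ _ _ (by norm_num) (by norm_num), ← ENNReal.ofReal_mul (by norm_num),
      ← ENNReal.ofReal_mul (by norm_num; exact hl32), ← ENNReal.ofReal_mul hC0]
    congr 2
    rw [show (8 : ℝ) / (1 / 4) = 32 by norm_num]; ring
  have hm : Measurable fun x : G => (SL L).indicator (fun _ => ENNReal.ofReal C0) x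
      + (SL 0).indicator (fun _ => ENNReal.ofReal C0) x :=
    (measurable_const.indicator (measurableSet_SL L)).add
      (measurable_const.indicator (measurableSet_SL 0))
  unfold ML
  rw [lintegral_add_left hm,
    lintegral_add_left (measurable_const.indicator (measurableSet_SL L)),
    lintegral_add_left (measurable_conv _ _ (measurable_chi L).ennreal_ofReal (measurable_Psi L).ennreal_ofReal),
    lintegral_conv _ _ (measurable_chi L).ennreal_ofReal (measurable_Psi L).ennreal_ofReal,
    lintegral_conv _ _ (measurable_chi 0).ennreal_ofReal (measurable_Psi L).ennreal_ofReal,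
    hS, hS, lint_chi, lint_chi, ← two_mul, ← two_mul, ENNReal.ofReal_add (by positivity) (by positivity),
    ENNReal.ofReal_mul (p := 2) (by norm_num), ENNReal.ofReal_mul (p := 2) (by norm_num),
    ENNReal.ofReal_ofNat, ENNReal.ofReal_mul (p := Real.log 2) hl2]
  gcongr
  exact lint_Psi L (by linarith)


/-! ### The counterexample -/

def Lj (j : ℕ) : ℝ := Real.exp (2 ^ j)

def cj (j : ℕ) : ℝ := (1 / 2) ^ j

def fex (z : G) : ℝ := ∑' j, cj j * fl (Lj j) z

lemma cj_pos (j : ℕ) : 0 < cj j := by unfold cj; positivity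

lemma hasSum_cj : HasSum cj 2 := hasSum_geometric_two

lemma cj_two (j : ℕ) : cj j * 2 ^ j = 1 := by
  unfold cj; rw [← mul_pow]; norm_num

lemma two_le_Lj (j : ℕ) : 2 ≤ Lj j := by
  unfold Lj
  have h1 : (1 : ℝ) ≤ 2 ^ j := one_le_pow₀ (by norm_num)
  have := Real.add_one_le_exp ((2 : ℝ) ^ j)
  linarith

lemma measurable_fl (L : ℝ) : Measurable (fl L) := (measurable_chi L).sub (measurable_chi 0)

lemma chi_le_one (L : ℝ) (z : G) : chi L z ≤ 1 := by
  by_cases h : z ∈ BL L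
  · rw [chi_mem h]
  · rw [chi_notMem h]; exact zero_le_one

lemma fl_abs_le (L : ℝ) (z : G) : |fl L z| ≤ chi L z + chi 0 z := by
  unfold fl
  have h1 := chi_nonneg L z
  have h2 := chi_nonneg 0 z
  rw [abs_le]; constructor <;> linarith

lemma summable_fex (z : G) : Summable fun j => cj j * fl (Lj j) z := by
  refine Summable.of_norm_bounded (g := fun j => cj j * 2) (hasSum_cj.summable.mul_right 2) fun j => ?_
  rw [norm_mul, Real.norm_of_nonneg (cj_pos j).le, Real.norm_eq_abs]
  have := fl_abs_le (Lj j) z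
  have h1 := chi_le_one (Lj j) z
  have h2 := chi_le_one 0 z
  have := (cj_pos j).le
  gcongr
  linarith

lemma measurable_fex : Measurable fex := by
  refine measurable_of_tendsto_metrizable (f := fun n z => ∑ j ∈ Finset.range n, cj j * fl (Lj j) z) ?_ ?_
  · intro n
    exact Finset.measurable_fun_sum _ fun j _ => (measurable_fl _).const_mul _
  · rw [tendsto_pi_nhds]
    intro z
    exact (summable_fex z).hasSum.tendsto_sum_nat

lemma lint_fl (L : ℝ) : ∫⁻ z, ‖fl L z‖ₑ ∂ρG ≤ ENNReal.ofReal (2 * Real.log 2) := by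
  calc _ ≤ ∫⁻ z, (ENNReal.ofReal (chi L z) + ENNReal.ofReal (chi 0 z)) ∂ρG := by
        refine lintegral_mono fun z => ?_
        rw [Real.enorm_eq_ofReal_abs, ← ENNReal.ofReal_add (chi_nonneg _ _) (chi_nonneg _ _)]
        exact ENNReal.ofReal_le_ofReal (fl_abs_le L z)
    _ = _ := by
        have hl2 : 0 ≤ Real.log 2 := Real.log_nonneg (by norm_num)
        rw [lintegral_add_left (measurable_chi L).ennreal_ofReal, lint_chi, lint_chi,
          ← ENNReal.ofReal_add hl2 hl2]
        congr 1; ring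

lemma integrable_fl (L : ℝ) : Integrable (fl L) ρG :=
  ⟨(measurable_fl L).aestronglyMeasurable, (lint_fl L).trans_lt ENNReal.ofReal_lt_top⟩

lemma enorm_cj (j : ℕ) (r : ℝ) : ‖cj j * r‖ₑ = ENNReal.ofReal (cj j) * ‖r‖ₑ := by
  rw [enorm_mul, Real.enorm_eq_ofReal (cj_pos j).le]

lemma integrable_fex : Integrable fex ρG := by
  refine ⟨measurable_fex.aestronglyMeasurable, ?_⟩
  have hl2 : 0 ≤ Real.log 2 := Real.log_nonneg (by norm_num)
  calc ∫⁻ z, ‖fex z‖ₑ ∂ρG ≤ ∫⁻ z, ∑' j, ENNReal.ofReal (cj j) * ‖fl (Lj j) z‖ₑ ∂ρG := by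
        refine lintegral_mono fun z => ?_
        refine enorm_tsum_le_tsum_enorm.trans (le_of_eq ?_)
        simp_rw [enorm_cj]
    _ = ∑' j, ENNReal.ofReal (cj j) * ∫⁻ z, ‖fl (Lj j) z‖ₑ ∂ρG := by
        rw [lintegral_tsum fun j => ((measurable_fl _).enorm.const_mul _).aemeasurable]
        congr 1; ext j
        rw [lintegral_const_mul _ (measurable_fl _).enorm]
    _ ≤ ∑' j, ENNReal.ofReal (cj j * (2 * Real.log 2)) := by
        refine ENNReal.tsum_le_tsum fun j => ?_
        rw [ENNReal.ofReal_mul (cj_pos j).le]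
        gcongr
        exact lint_fl _
    _ = ENNReal.ofReal (∑' j, cj j * (2 * Real.log 2)) := by
        rw [ENNReal.ofReal_tsum_of_nonneg (fun j => mul_nonneg (cj_pos j).le (by positivity))
          (hasSum_cj.summable.mul_right _)]
    _ < ⊤ := ENNReal.ofReal_lt_top

lemma conv_fex {t : ℝ} (ht : 0 < t) (x : G) (hx : 0 < x.2.2) :
    ENNReal.ofReal |convHeat fex t x| ≤ ∑' j, ENNReal.ofReal (cj j) * ML (Lj j) x := by
  have hi : ∀ j, Integrable (fun y => cj j * (fl (Lj j) (gMul x (gInv y)) * heatK t y)) ρG := by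
    intro j
    refine Integrable.const_mul ?_ _
    refine ((integrable_chi_heatK ht (Lj j) x hx).sub (integrable_chi_heatK ht 0 x hx)).congr ?_
    refine Eventually.of_forall fun y => ?_
    simp only [Pi.sub_apply, fl]; ring
  have hb : ∀ j, ∫ y, ‖cj j * (fl (Lj j) (gMul x (gInv y)) * heatK t y)‖ ∂ρG
      ≤ cj j * (2 * (K0 t x).toReal) := by
    intro j
    have hK := K0_lt_top t x hx
    have hKb : ∀ L : ℝ, ∫ y, chi L (gMul x (gInv y)) * heatK t y ∂ρG ≤ (K0 t x).toReal := by
      intro L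
      rw [integral_eq_lintegral_of_nonneg_ae
        (ae_pos.mono fun y hy => mul_nonneg (chi_nonneg _ _) (heatK_nonneg ht y hy))
        (integrable_chi_heatK ht L x hx).1]
      exact ENNReal.toReal_mono hK.ne (lint_chi_heatK ht L x hx)
    calc ∫ y, ‖cj j * (fl (Lj j) (gMul x (gInv y)) * heatK t y)‖ ∂ρG
        ≤ ∫ y, cj j * (chi (Lj j) (gMul x (gInv y)) * heatK t y + chi 0 (gMul x (gInv y)) * heatK t y) ∂ρG := by
          refine integral_mono_ae (hi j).norm
            (((integrable_chi_heatK ht (Lj j) x hx).add (integrable_chi_heatK ht 0 x hx)).const_mul _)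
            (ae_pos.mono fun y hy => ?_)
          have h0 := heatK_nonneg ht y hy
          have h1 := (cj_pos j).le
          simp only
          rw [norm_mul, norm_mul, Real.norm_of_nonneg h1, Real.norm_of_nonneg h0, ← add_mul,
            Real.norm_eq_abs]
          gcongr
          exact fl_abs_le _ _
      _ ≤ _ := by
          rw [integral_const_mul, integral_add (integrable_chi_heatK ht (Lj j) x hx)
            (integrable_chi_heatK ht 0 x hx)]
          have := hKb (Lj j)
          have := hKb 0
          have h1 := (cj_pos j).le
          gcongr
          linarith
  have hs : Summable fun j => ∫ y, ‖cj j * (fl (Lj j) (gMul x (gInv y)) * heatK t y)‖ ∂ρG :=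
    Summable.of_nonneg_of_le (fun j => integral_nonneg fun y => norm_nonneg _) hb
      (hasSum_cj.summable.mul_right _)
  have e : convHeat fex t x
      = ∑' j, cj j * ∫ y, fl (Lj j) (gMul x (gInv y)) * heatK t y ∂ρG := by
    have := integral_tsum_of_summable_integral_norm hi hs
    simp_rw [integral_const_mul] at this
    rw [this]
    unfold convHeat fex
    congr 1; ext y
    rw [← tsum_mul_right]
    congr 1; ext j; ring
  rw [← Real.enorm_eq_ofReal_abs, e]
  refine enorm_tsum_le_tsum_enorm.trans (ENNReal.tsum_le_tsum fun j => ?_)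
  rw [enorm_cj]
  gcongr
  exact conv_bound ht (two_le_Lj j) x hx

lemma loglog_Lj (j : ℕ) : Real.log (1 + Real.log (1 + 3 * Lj j)) ≤ 2 + j := by
  have h4 : Real.log 4 ≤ 2 := by
    rw [show (4 : ℝ) = 2 ^ 2 by norm_num, Real.log_pow]
    have := Real.log_two_lt_d9
    push_cast; linarith
  have hp : (1 : ℝ) ≤ 2 ^ j := one_le_pow₀ (by norm_num)
  have h1 : Real.log (1 + 3 * Lj j) ≤ 2 + 2 ^ j := by
    calc Real.log (1 + 3 * Lj j) ≤ Real.log (4 * Lj j) := by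
          have := two_le_Lj j
          exact Real.log_le_log (by linarith) (by linarith)
      _ = Real.log 4 + 2 ^ j := by
          unfold Lj
          rw [Real.log_mul (by norm_num) (Real.exp_pos _).ne', Real.log_exp]
      _ ≤ _ := by linarith
  have h0 : 0 ≤ Real.log (1 + 3 * Lj j) := Real.log_nonneg (by linarith [two_le_Lj j])
  calc Real.log (1 + Real.log (1 + 3 * Lj j)) ≤ Real.log (4 * 2 ^ j) :=
        Real.log_le_log (by linarith) (by linarith)
    _ = Real.log 4 + j * Real.log 2 := by
        rw [Real.log_mul (by norm_num) (by positivity), Real.log_pow]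
    _ ≤ 2 + j * 1 := by
        have := Real.log_two_lt_d9
        gcongr
        linarith
    _ = _ := by ring

lemma lint_max : ∫⁻ x, maxHeat fex x ∂ρG < ⊤ := by
  have hc := c0_pos
  have hC0 : 0 ≤ C0 := by unfold C0; positivity
  have hl32 : 0 ≤ Real.log 32 := Real.log_nonneg (by norm_num)
  have hl2 : 0 ≤ Real.log 2 := Real.log_nonneg (by norm_num)
  set A := 2 * (C0 * (289 * Real.log 32)) with hA
  set B := 2 * (Real.log 2 * (c0 * 18000000 * (2 * π ^ 2) * 2)) with hB
  have hA0 : 0 ≤ A := by positivity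
  have hB0 : 0 ≤ B := by positivity
  have hML : ∀ j, ∫⁻ x, ML (Lj j) x ∂ρG ≤ ENNReal.ofReal (A + B * (3 + j)) := by
    intro j
    refine (lint_ML (Lj j) (two_le_Lj j)).trans (ENNReal.ofReal_le_ofReal ?_)
    have := loglog_Lj j
    calc _ = A + B * (1 + Real.log (1 + Real.log (1 + 3 * Lj j))) := by rw [hA, hB]; ring
      _ ≤ _ := by
        have : 1 + Real.log (1 + Real.log (1 + 3 * Lj j)) ≤ 3 + j := by linarith
        gcongr
  have hsum : Summable fun j : ℕ => cj j * (A + B * (3 + j)) := by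
    have s1 := (hasSum_cj.summable.mul_right (A + 3 * B))
    have s2 := (summable_pow_mul_geometric_of_norm_lt_one 1
      (show ‖(1 / 2 : ℝ)‖ < 1 by rw [Real.norm_of_nonneg] <;> norm_num)).mul_right B
    refine (s1.add s2).congr fun j => ?_
    unfold cj; ring
  calc ∫⁻ x, maxHeat fex x ∂ρG
      ≤ ∫⁻ x, ∑' j, ENNReal.ofReal (cj j) * ML (Lj j) x ∂ρG := by
        refine lintegral_rho_le fun x hx => ?_
        unfold maxHeat
        exact iSup_le fun t => iSup_le fun ht => conv_fex ht x hx
    _ = ∑' j, ENNReal.ofReal (cj j) * ∫⁻ x, ML (Lj j) x ∂ρG := by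
        rw [lintegral_tsum fun j => ((measurable_ML _).const_mul _).aemeasurable]
        congr 1; ext j
        rw [lintegral_const_mul _ (measurable_ML _)]
    _ ≤ ∑' j : ℕ, ENNReal.ofReal (cj j * (A + B * (3 + j))) := by
        refine ENNReal.tsum_le_tsum fun j => ?_
        rw [ENNReal.ofReal_mul (cj_pos j).le]
        gcongr
        exact hML j
    _ = ENNReal.ofReal (∑' j : ℕ, cj j * (A + B * (3 + j))) := by
        rw [ENNReal.ofReal_tsum_of_nonneg (fun j => mul_nonneg (cj_pos j).le (by positivity)) hsum]
    _ < ⊤ := ENNReal.ofReal_lt_top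

lemma integrable_chi (L : ℝ) : Integrable (chi L) ρG := by
  refine ⟨(measurable_chi L).aestronglyMeasurable, ?_⟩
  rw [hasFiniteIntegral_iff_ofReal (Eventually.of_forall (chi_nonneg L)), lint_chi]
  exact ENNReal.ofReal_lt_top

lemma integral_chi (L : ℝ) : ∫ z, chi L z ∂ρG = Real.log 2 := by
  rw [integral_eq_lintegral_of_nonneg_ae (Eventually.of_forall (chi_nonneg L))
    (integrable_chi L).1, lint_chi, ENNReal.toReal_ofReal (Real.log_nonneg (by norm_num))]

lemma hN_nonneg (N x : ℝ) (hN0 : 0 ≤ N) : 0 ≤ hN N x := by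
  unfold hN
  exact Real.log_nonneg (by linarith [le_min (abs_nonneg x) hN0])

lemma pair_chi0 (N : ℝ) (hN0 : 0 ≤ N) : ∫ z, chi 0 z * hN N z.1 ∂ρG ≤ Real.log 2 * Real.log 2 := by
  have hi := integrable_chi 0
  calc _ ≤ ∫ z, chi 0 z * Real.log 2 ∂ρG := by
        refine integral_mono (integrable_mul_hN hi N hN0) (hi.mul_const _) fun z => ?_
        simp only
        by_cases h : z ∈ BL 0
        · refine mul_le_mul_of_nonneg_left ?_ (chi_nonneg _ _)
          obtain ⟨⟨h1, h2⟩, -⟩ := h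
          unfold hN
          have := le_min (abs_nonneg z.1) hN0
          refine Real.log_le_log (by linarith) ?_
          have := min_le_left |z.1| N
          rw [abs_of_nonneg h1] at this ⊢
          linarith
        · simp [chi_notMem h]
    _ = _ := by rw [integral_mul_const, integral_chi]

lemma pair_chi_nonneg (L N : ℝ) (hN0 : 0 ≤ N) : 0 ≤ ∫ z, chi L z * hN N z.1 ∂ρG :=
  integral_nonneg fun z => mul_nonneg (chi_nonneg _ _) (hN_nonneg _ _ hN0)

lemma pair_chi_ge (L N : ℝ) (hL : 0 < L) (hN0 : L ≤ N) :
    Real.log 2 * Real.log L ≤ ∫ z, chi L z * hN N z.1 ∂ρG := by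
  have hi := integrable_chi L
  calc Real.log 2 * Real.log L = ∫ z, chi L z * Real.log L ∂ρG := by
        rw [integral_mul_const, integral_chi]
    _ ≤ _ := by
        refine integral_mono (hi.mul_const _) (integrable_mul_hN hi N (by linarith)) fun z => ?_
        simp only
        by_cases h : z ∈ BL L
        · refine mul_le_mul_of_nonneg_left ?_ (chi_nonneg _ _)
          obtain ⟨⟨h1, h2⟩, -⟩ := h
          unfold hN
          refine Real.log_le_log hL ?_
          have : L ≤ min |z.1| N := le_min (h1.trans (le_abs_self _)) hN0
          linarith
        · simp [chi_notMem h]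

lemma pair_fl (L N : ℝ) (hN0 : 0 ≤ N) : ∫ z, fl L z * hN N z.1 ∂ρG
    = (∫ z, chi L z * hN N z.1 ∂ρG) - ∫ z, chi 0 z * hN N z.1 ∂ρG := by
  rw [← integral_sub (integrable_mul_hN (integrable_chi L) N hN0)
    (integrable_mul_hN (integrable_chi 0) N hN0)]
  congr 1; ext z; unfold fl; ring

lemma pair_fex (N : ℝ) (hN0 : 0 ≤ N) :
    HasSum (fun j => cj j * ∫ z, fl (Lj j) z * hN N z.1 ∂ρG) (∫ z, fex z * hN N z.1 ∂ρG) := by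
  have hi : ∀ j, Integrable (fun z => cj j * (fl (Lj j) z * hN N z.1)) ρG := fun j =>
    (integrable_mul_hN (integrable_fl (Lj j)) N hN0).const_mul _
  have hlN : 0 ≤ Real.log (1 + N) := Real.log_nonneg (by linarith)
  have hb : ∀ j, ∫ z, ‖cj j * (fl (Lj j) z * hN N z.1)‖ ∂ρG
      ≤ cj j * (2 * Real.log 2 * Real.log (1 + N)) := by
    intro j
    have h1 := (cj_pos j).le
    calc _ ≤ ∫ z, cj j * ((chi (Lj j) z + chi 0 z) * Real.log (1 + N)) ∂ρG := by
          refine integral_mono (hi j).norm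
            ((((integrable_chi (Lj j)).add (integrable_chi 0)).mul_const _).const_mul _) fun z => ?_
          simp only
          rw [norm_mul, norm_mul, Real.norm_of_nonneg h1]
          have := hN_bdd N z.1 hN0
          have h2 : ‖fl (Lj j) z‖ ≤ chi (Lj j) z + chi 0 z := fl_abs_le _ _
          have := chi_nonneg (Lj j) z
          have := chi_nonneg 0 z
          gcongr
      _ = _ := by
          rw [integral_const_mul, integral_mul_const,
            integral_add (integrable_chi (Lj j)) (integrable_chi 0), integral_chi, integral_chi]
          ring
  have hs : Summable fun j => ∫ z, ‖cj j * (fl (Lj j) z * hN N z.1)‖ ∂ρG :=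
    Summable.of_nonneg_of_le (fun j => integral_nonneg fun y => norm_nonneg _) hb
      (hasSum_cj.summable.mul_right _)
  have := hasSum_integral_of_summable_integral_norm hi hs
  simp_rw [integral_const_mul] at this
  have e : ∫ z, fex z * hN N z.1 ∂ρG = ∫ z, ∑' j, cj j * (fl (Lj j) z * hN N z.1) ∂ρG := by
    refine integral_congr_ae (Eventually.of_forall fun z => ?_)
    simp only [fex]
    rw [← tsum_mul_right]
    exact tsum_congr fun j => by ring
  rw [e]
  exact this

lemma not_H1 : ¬ MemH1 fex := by
  intro h
  obtain ⟨C, hC⟩ := H1_pair h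
  set l := Real.log 2 with hl
  have hl0 : 0 < l := Real.log_pos (by norm_num)
  obtain ⟨J, hJ⟩ := exists_nat_gt ((C + 2 * (l * l)) / l)
  rw [div_lt_iff₀ hl0] at hJ
  have hN0 : 0 ≤ Lj J := by linarith [two_le_Lj J]
  have h1 := (pair_fex (Lj J) hN0).add (hasSum_cj.mul_right (l * l))
  have h2 := sum_le_hasSum (Finset.range J) (fun j _ => ?_) h1
  · have h3 : ∑ j ∈ Finset.range J, l ≤ ∑ j ∈ Finset.range J,
        (cj j * ∫ z, fl (Lj j) z * hN (Lj J) z.1 ∂ρG + cj j * (l * l)) := by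
      refine Finset.sum_le_sum fun j hj => ?_
      have hjJ : Lj j ≤ Lj J := by
        unfold Lj
        have := (Finset.mem_range.1 hj).le
        refine Real.exp_le_exp.2 (pow_le_pow_right₀ (by norm_num) this)
      have h4 := pair_chi_ge (Lj j) (Lj J) (by linarith [two_le_Lj j]) hjJ
      have h5 := pair_chi0 (Lj J) hN0
      rw [pair_fl _ _ hN0, ← mul_add]
      have h6 : Real.log (Lj j) = 2 ^ j := Real.log_exp _
      rw [h6] at h4
      calc l = cj j * (l * 2 ^ j) := by rw [mul_left_comm, cj_two, mul_one]
        _ ≤ _ := by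
          have := (cj_pos j).le
          gcongr
          linarith
    rw [Finset.sum_const, Finset.card_range, nsmul_eq_mul] at h3
    have := (abs_le.1 (hC (Lj J) hN0)).2
    linarith
  · have h4 := pair_chi_nonneg (Lj j) (Lj J) hN0
    have h5 := pair_chi0 (Lj J) hN0
    rw [pair_fl _ _ hN0, ← mul_add]
    refine mul_nonneg (cj_pos j).le ?_
    linarith

theorem exists_L1_maxHeat_L1_not_H1 :
    ∃ f : G → ℝ, Integrable f ρG ∧ (∫⁻ x, maxHeat f x ∂ρG) < ⊤ ∧ ¬ MemH1 f := by
  exact ⟨fex, integrable_fex, lint_max, not_H1⟩
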